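/- (Uniform bound on the logarithmic moment.) Under the blow-up setup, there is a constant C' independent of i such that A_i := ∫_{B(0, δ_i/(2 r_i))} (1/2π) log|θ̃| · V_i(x_i + r_i θ̃) e^{v_i(θ̃)} dθ̃ ≤ C' for all i. -/

import Mathlib

open MeasureTheory Filter Metric

abbrev E2 := EuclideanSpace ℝ (Fin 2)

noncomputable def pd (j : Fin 2) (u : E2 → ℝ) (x : E2) : ℝ :=
  fderiv ℝ u x (EuclideanSpace.single j 1)

noncomputable def lapl (u : E2 → ℝ) (x : E2) : ℝ :=
  pd 0 (pd 0 u) x + pd 1 (pd 1 u) x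


lemma hasDerivAt_maxpow (n : ℕ) (t : ℝ) :
    HasDerivAt (fun t : ℝ => (max t 0)^(n+2)) ((n+2)*(max t 0)^(n+1)) t := by
  rcases lt_trichotomy t 0 with h | h | h
  · have h1 : (fun t : ℝ => (max t 0)^(n+2)) =ᶠ[nhds t] fun _ => 0 := by
      filter_upwards [gt_mem_nhds h] with x hx
      rw [max_eq_right hx.le]; simp
    rw [max_eq_right h.le]
    simpa using (hasDerivAt_const t (0:ℝ)).congr_of_eventuallyEq h1
  · subst h
    have h1 : HasDerivWithinAt (fun t : ℝ => (max t 0)^(n+2)) 0 (Set.Iic 0) 0 := by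
      refine (hasDerivWithinAt_const (0:ℝ) _ (0:ℝ)).congr (fun x hx => ?_) (by simp)
      rw [max_eq_right hx]; simp
    have h2 : HasDerivWithinAt (fun t : ℝ => (max t 0)^(n+2)) 0 (Set.Ici 0) 0 := by
      have := (hasDerivAt_pow (n+2) (0:ℝ)).hasDerivWithinAt (s := Set.Ici 0)
      simp at this
      refine this.congr (fun x hx => ?_) (by simp)
      rw [max_eq_left hx]
    have := h1.union h2
    rw [Set.Iic_union_Ici] at this
    simpa using this.hasDerivAt Filter.univ_mem
  · have h1 : (fun t : ℝ => (max t 0)^(n+2)) =ᶠ[nhds t] fun t => t^(n+2) := by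
      filter_upwards [lt_mem_nhds h] with x hx
      rw [max_eq_left hx.le]
    rw [max_eq_left h.le]
    have := (hasDerivAt_pow (n+2) t).congr_of_eventuallyEq h1
    simpa using this

noncomputable def qq (ρ : ℝ) (z : E2) : ℝ := max (1 - ‖z‖^2/ρ^2) 0
noncomputable def kint (ρ ε t : ℝ) : ℝ := (1/2)*(max (1-t/ρ^2) 0)^3/(max t 0+ε)
noncomputable def kk (ρ ε s : ℝ) : ℝ := ∫ t in s..ρ^2, kint ρ ε t
noncomputable def KK (ρ ε : ℝ) (z : E2) : ℝ := kk ρ ε (‖z‖^2)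
noncomputable def GG (ρ ε : ℝ) (z : E2) : ℝ := qq ρ z^3/(‖z‖^2+ε)
noncomputable def HH (ρ ε : ℝ) (z : E2) : ℝ :=
  6/ρ^2 * qq ρ z^2/(‖z‖^2+ε) + 2*qq ρ z^3/(‖z‖^2+ε)^2
noncomputable def NN (ρ ε : ℝ) (z : E2) : ℝ := 2*qq ρ z^3*ε/(‖z‖^2+ε)^2
noncomputable def PP (ρ ε : ℝ) (z : E2) : ℝ := 6/ρ^2 * qq ρ z^2 * (‖z‖^2/(‖z‖^2+ε))

lemma kint_cont (ρ : ℝ) {ε : ℝ} (hε : 0 < ε) : Continuous (kint ρ ε) := by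
  unfold kint
  refine Continuous.div (by fun_prop) (by fun_prop) (fun t => ?_)
  have : 0 ≤ max t 0 := le_max_right _ _
  positivity

lemma kint_nonneg (ρ : ℝ) {ε : ℝ} (hε : 0 < ε) (t : ℝ) : 0 ≤ kint ρ ε t := by
  unfold kint
  have : 0 ≤ max t 0 := le_max_right _ _
  have : 0 ≤ max (1-t/ρ^2) 0 := le_max_right _ _
  positivity

lemma kk_hasDerivAt (ρ : ℝ) {ε : ℝ} (hε : 0 < ε) (s : ℝ) :
    HasDerivAt (kk ρ ε) (-kint ρ ε s) s :=
  intervalIntegral.integral_hasDerivAt_left ((kint_cont ρ hε).intervalIntegrable _ _)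
    ((kint_cont ρ hε).stronglyMeasurableAtFilter _ _) (kint_cont ρ hε).continuousAt

lemma kk_zero {ρ ε s : ℝ} (hρ : 0 < ρ) (hs : ρ^2 ≤ s) : kk ρ ε s = 0 := by
  unfold kk
  rw [intervalIntegral.integral_symm, neg_eq_zero]
  have : ∀ t ∈ Set.uIcc (ρ^2) s, kint ρ ε t = 0 := by
    intro t ht
    rw [Set.uIcc_of_le hs] at ht
    unfold kint
    have : 1 - t/ρ^2 ≤ 0 := by
      rw [sub_nonpos, le_div_iff₀ (by positivity)]; linarith [ht.1]
    rw [max_eq_right this]; simp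
  rw [intervalIntegral.integral_congr this]; simp

lemma kk_nonneg {ρ ε : ℝ} (hρ : 0 < ρ) (hε : 0 < ε) (s : ℝ) : 0 ≤ kk ρ ε s := by
  by_cases h : ρ^2 ≤ s
  · rw [kk_zero hρ h]
  · exact intervalIntegral.integral_nonneg (by linarith) (fun t _ => kint_nonneg ρ hε t)

lemma kk_upper {ρ ε s : ℝ} (hρ : 0 < ρ) (hε : 0 < ε) (hs : 0 < s) (h : s ≤ ρ^2) :
    kk ρ ε s ≤ (1/2) * Real.log (ρ^2/s) := by
  have h1 : kk ρ ε s ≤ ∫ t in s..ρ^2, (1/2)*(1/t) := by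
    refine intervalIntegral.integral_mono_on h ((kint_cont ρ hε).intervalIntegrable _ _) ?_ ?_
    · apply IntervalIntegrable.const_mul
      exact intervalIntegral.intervalIntegrable_one_div
        (fun x hx => by rw [Set.uIcc_of_le h] at hx; linarith [hx.1]) continuousOn_id
    · intro t ht
      have ht0 : 0 < t := lt_of_lt_of_le hs ht.1
      unfold kint
      rw [max_eq_left ht0.le, mul_div_assoc]
      have : max (1-t/ρ^2) 0 ≤ 1 := by
        apply max_le _ zero_le_one
        have : 0 ≤ t/ρ^2 := by positivity
        linarith
      have h3 : (max (1-t/ρ^2) 0)^3 ≤ 1 := pow_le_one₀ (le_max_right _ _) this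
      gcongr
      linarith
  rw [intervalIntegral.integral_const_mul, integral_one_div_of_pos hs (by positivity)] at h1
  exact h1

lemma kk_lower {ρ ε s : ℝ} (hρ : 0 < ρ) (hε : 0 < ε) (hs : 0 ≤ s) (h : s ≤ ρ^2) :
    (1/2) * Real.log ((ρ^2+ε)/(s+ε)) - 3/2 ≤ kk ρ ε s := by
  have hi : IntervalIntegrable (fun t : ℝ => 1/(t+ε)) volume s (ρ^2) := by
    apply ContinuousOn.intervalIntegrable
    refine ContinuousOn.div (by fun_prop) (by fun_prop) (fun t ht => ?_)
    rw [Set.uIcc_of_le h] at ht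
    have := ht.1
    exact (by linarith : (0:ℝ) < t + ε).ne'
  have h1 : (∫ t in s..ρ^2, ((1/2)*(1/(t+ε)) - 3/(2*ρ^2))) ≤ kk ρ ε s := by
    refine intervalIntegral.integral_mono_on h ?_ ((kint_cont ρ hε).intervalIntegrable _ _) ?_
    · exact (hi.const_mul _).sub (by simp)
    · intro t ht
      have ht0 : 0 ≤ t := le_trans hs ht.1
      unfold kint
      rw [max_eq_left ht0]
      have hu : 0 ≤ 1 - t/ρ^2 := by
        rw [sub_nonneg, div_le_iff₀ (by positivity)]; linarith [ht.2]
      rw [max_eq_left hu]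
      have hu2 : 0 ≤ t/ρ^2 := by positivity
      have h3 : 1 - 3*(t/ρ^2) ≤ (1 - t/ρ^2)^3 := by
        set a := t/ρ^2
        nlinarith [mul_nonneg (sq_nonneg a) (by linarith : 0 ≤ 3 - a)]
      have hte : 0 < t + ε := by positivity
      have h4 : (1/2)*(1 - 3*(t/ρ^2))/(t+ε) ≤ (1/2)*(1 - t/ρ^2)^3/(t+ε) := by gcongr
      refine le_trans ?_ h4
      have h5 : t/(t+ε) ≤ 1 := by rw [div_le_one hte]; linarith
      have h6 : (1/2)*(1 - 3*(t/ρ^2))/(t+ε) = (1/2)*(1/(t+ε)) - 3/(2*ρ^2) * (t/(t+ε)) := by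
        field_simp
      rw [h6]
      have : 0 ≤ 3/(2*ρ^2) := by positivity
      nlinarith
  rw [intervalIntegral.integral_sub (hi.const_mul _) (by simp),
    intervalIntegral.integral_const_mul] at h1
  have h2 : ∫ t in s..ρ^2, 1/(t+ε) = Real.log ((ρ^2+ε)/(s+ε)) := by
    rw [intervalIntegral.integral_comp_add_right (fun t => 1/t) ε,
      integral_one_div_of_pos (by positivity) (by positivity)]
  rw [h2] at h1
  simp only [intervalIntegral.integral_const, smul_eq_mul] at h1
  have h7 : (ρ^2 - s) * (3/(2*ρ^2)) ≤ 3/2 := by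
    have : ρ^2 * (3/(2*ρ^2)) = 3/2 := by field_simp
    have : 0 ≤ s * (3/(2*ρ^2)) := by positivity
    linarith
  linarith

lemma qq_nonneg (ρ : ℝ) (z : E2) : 0 ≤ qq ρ z := le_max_right _ _
lemma qq_le_one (ρ : ℝ) (z : E2) : qq ρ z ≤ 1 := by
  apply max_le _ zero_le_one
  have : 0 ≤ ‖z‖^2/ρ^2 := by positivity
  linarith
lemma qq_zero {ρ : ℝ} (hρ : 0 < ρ) {z : E2} (h : ρ ≤ ‖z‖) : qq ρ z = 0 := by
  apply max_eq_right
  rw [sub_nonpos, le_div_iff₀ (by positivity)]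
  nlinarith
lemma qq_cont (ρ : ℝ) : Continuous (qq ρ) := by unfold qq; fun_prop
lemma KK_zero {ρ ε : ℝ} (hρ : 0 < ρ) {z : E2} (h : ρ ≤ ‖z‖) : KK ρ ε z = 0 :=
  kk_zero hρ (by nlinarith)
lemma GG_zero {ρ ε : ℝ} (hρ : 0 < ρ) {z : E2} (h : ρ ≤ ‖z‖) : GG ρ ε z = 0 := by
  simp [GG, qq_zero hρ h]
lemma HH_zero {ρ ε : ℝ} (hρ : 0 < ρ) {z : E2} (h : ρ ≤ ‖z‖) : HH ρ ε z = 0 := by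
  simp [HH, qq_zero hρ h]
lemma NN_zero {ρ ε : ℝ} (hρ : 0 < ρ) {z : E2} (h : ρ ≤ ‖z‖) : NN ρ ε z = 0 := by
  simp [NN, qq_zero hρ h]
lemma PP_zero {ρ ε : ℝ} (hρ : 0 < ρ) {z : E2} (h : ρ ≤ ‖z‖) : PP ρ ε z = 0 := by
  simp [PP, qq_zero hρ h]

lemma sε_pos {ε : ℝ} (hε : 0 < ε) (z : E2) : 0 < ‖z‖^2+ε := by positivity

lemma GG_cont (ρ : ℝ) {ε : ℝ} (hε : 0 < ε) : Continuous (GG ρ ε) := by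
  unfold GG
  exact Continuous.div ((qq_cont ρ).pow 3) (by fun_prop) (fun z => (sε_pos hε z).ne')
lemma HH_cont (ρ : ℝ) {ε : ℝ} (hε : 0 < ε) : Continuous (HH ρ ε) := by
  unfold HH
  exact ((((qq_cont ρ).pow 2).const_mul _).div (by fun_prop) (fun z => (sε_pos hε z).ne')).add
    ((((qq_cont ρ).pow 3).const_mul _).div (by fun_prop) (fun z => by have := sε_pos hε z; positivity))
lemma NN_cont (ρ : ℝ) {ε : ℝ} (hε : 0 < ε) : Continuous (NN ρ ε) := by
  unfold NN
  exact ((((qq_cont ρ).pow 3).const_mul _).mul_const _).div (by fun_prop)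
    (fun z => by have := sε_pos hε z; positivity)
lemma PP_cont (ρ : ℝ) {ε : ℝ} (hε : 0 < ε) : Continuous (PP ρ ε) := by
  unfold PP
  exact (((qq_cont ρ).pow 2).const_mul _).mul
    (Continuous.div (by fun_prop) (by fun_prop) (fun z => (sε_pos hε z).ne'))

lemma KK_hasFDerivAt (ρ : ℝ) {ε : ℝ} (hε : 0 < ε) (z : E2) :
    HasFDerivAt (KK ρ ε) (-(GG ρ ε z) • innerSL ℝ z) z := by
  have h1 := (hasStrictFDerivAt_norm_sq z).hasFDerivAt
  have h2 := (kk_hasDerivAt ρ hε (‖z‖^2)).comp_hasFDerivAt z h1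
  refine h2.congr_fderiv ?_
  ext e
  simp [kint, GG, qq]
  ring

lemma GG_hasFDerivAt {ρ : ℝ} (hρ : 0 < ρ) {ε : ℝ} (hε : 0 < ε) (z : E2) :
    HasFDerivAt (GG ρ ε) (-(HH ρ ε z) • innerSL ℝ z) z := by
  have h1 := (hasStrictFDerivAt_norm_sq z).hasFDerivAt
  have hz := sε_pos hε z
  have h3 : HasDerivAt (fun s : ℝ => 1 - s/ρ^2) (-(1/ρ^2)) (‖z‖^2) := by
    simpa using ((hasDerivAt_id (‖z‖^2)).div_const (ρ^2)).const_sub 1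
  have h4 := (hasDerivAt_maxpow 1 (1 - ‖z‖^2/ρ^2)).comp (‖z‖^2) h3
  have h5 := h4.div ((hasDerivAt_id (‖z‖^2)).add_const ε) hz.ne'
  have h2 := h5.comp_hasFDerivAt z h1
  refine h2.congr_fderiv ?_
  ext e
  simp [HH, qq]
  field_simp
  ring

lemma tr_eq {ρ ε : ℝ} (hρ : 0 < ρ) (hε : 0 < ε) (z : E2) :
    -2 * GG ρ ε z + ‖z‖^2 * HH ρ ε z = PP ρ ε z - NN ρ ε z := by
  have hz := (sε_pos hε z).ne'
  unfold GG HH PP NN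
  field_simp
  ring


lemma KK_cont (ρ : ℝ) {ε : ℝ} (hε : 0 < ε) : Continuous (KK ρ ε) :=
  continuous_iff_continuousAt.2 fun z => (KK_hasFDerivAt ρ hε z).continuousAt

lemma HasFDerivAt.subc {f : E2 → ℝ} {f' : E2 →L[ℝ] ℝ} {y x : E2} (h : HasFDerivAt f f' (y-x)) :
    HasFDerivAt (fun y => f (y-x)) f' y := by
  have := h.comp y ((hasFDerivAt_id y).sub_const x)
  rw [ContinuousLinearMap.comp_id] at this
  exact this

lemma int_mul_c {f g : E2 → ℝ} (hf : Continuous f) (hg : Continuous g) (hc : HasCompactSupport g) :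
    Integrable (fun y => f y * g y) :=
  (hf.mul hg).integrable_of_hasCompactSupport hc.mul_left

lemma byparts {f g : E2 → ℝ} {f' : E2 → (E2 →L[ℝ] ℝ)} (hf : ∀ y, HasFDerivAt f (f' y) y)
    (e : E2) (hf'c : Continuous fun y => f' y e)
    (hg : ContDiff ℝ 1 g) (hc : HasCompactSupport g) :
    ∫ y, f y * fderiv ℝ g y e = - ∫ y, f' y e * g y := by
  have hfc : Continuous f := continuous_iff_continuousAt.2 fun z => (hf z).continuousAt
  have h1 : ∀ y, fderiv ℝ f y = f' y := fun y => (hf y).fderiv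
  have hgd : Continuous fun y => fderiv ℝ g y e :=
    (hg.continuous_fderiv (by norm_num)).clm_apply continuous_const
  have := integral_mul_fderiv_eq_neg_fderiv_mul_of_integrable (μ := volume) (f := f) (g := g) (v := e)
    (by simp_rw [h1]; exact int_mul_c hf'c hg.continuous hc)
    (int_mul_c hfc hgd (hc.fderiv_apply (𝕜 := ℝ) e))
    (int_mul_c hfc hg.continuous hc)
    (fun y _ => (hf y).differentiableAt) (fun y _ => hg.differentiable (by norm_num) y)
  simpa [h1] using this

lemma L1 {ρ ε : ℝ} (hε : 0 < ε) (x e : E2) {g : E2 → ℝ}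
    (hg : ContDiff ℝ 1 g) (hc : HasCompactSupport g) :
    ∫ y, KK ρ ε (y-x) * fderiv ℝ g y e = ∫ y, (inner ℝ (y-x) e * GG ρ ε (y-x)) * g y := by
  have hG : Continuous fun y : E2 => GG ρ ε (y-x) := (GG_cont ρ hε).comp (by fun_prop)
  rw [byparts (f := fun y => KK ρ ε (y-x)) (f' := fun y => -(GG ρ ε (y-x)) • innerSL ℝ (y-x))
    (fun y => HasFDerivAt.subc (KK_hasFDerivAt ρ hε (y-x))) e ?_ hg hc, ← integral_neg]
  · congr 1; ext y; simp only [ContinuousLinearMap.smul_apply, innerSL_apply_apply, smul_eq_mul]; ring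
  · simp; fun_prop

lemma L2 {ρ ε : ℝ} (hρ : 0 < ρ) (hε : 0 < ε) (x e e' : E2) {g : E2 → ℝ}
    (hg : ContDiff ℝ 1 g) (hc : HasCompactSupport g) :
    ∫ y, (inner ℝ (y-x) e * GG ρ ε (y-x)) * fderiv ℝ g y e' =
     - ∫ y, (inner ℝ e e' * GG ρ ε (y-x) - inner ℝ (y-x) e * inner ℝ (y-x) e' * HH ρ ε (y-x)) * g y := by
  have hG : Continuous fun y : E2 => GG ρ ε (y-x) := (GG_cont ρ hε).comp (by fun_prop)
  have hH : Continuous fun y : E2 => HH ρ ε (y-x) := (HH_cont ρ hε).comp (by fun_prop)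
  have hi : ∀ y : E2, HasFDerivAt (fun y : E2 => inner ℝ (y-x) e) (innerSL ℝ e) y := by
    intro y
    have := HasFDerivAt.subc ((innerSL ℝ e).hasFDerivAt (x := y-x))
    refine this.congr_of_eventuallyEq (Eventually.of_forall fun z => ?_)
    simp [real_inner_comm]
  rw [byparts (f := fun y => inner ℝ (y-x) e * GG ρ ε (y-x))
    (f' := fun y => (inner ℝ (y-x) e : ℝ) • (-(HH ρ ε (y-x)) • innerSL ℝ (y-x)) + GG ρ ε (y-x) • innerSL ℝ e)
    (fun y => (hi y).mul (HasFDerivAt.subc (GG_hasFDerivAt hρ hε (y-x)))) e' ?_ hg hc]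
  · congr 2; ext y; simp only [ContinuousLinearMap.smul_apply, ContinuousLinearMap.add_apply, innerSL_apply_apply, smul_eq_mul]; ring
  · simp; fun_prop

lemma fd_contDiff {w : E2 → ℝ} (hw : ContDiff ℝ 2 w) (e : E2) :
    ContDiff ℝ 1 (fun y => fderiv ℝ w y e) :=
  (hw.fderiv_right (m := 1) (by norm_num)).clm_apply contDiff_const

lemma lapl_cont {w : E2 → ℝ} (hw : ContDiff ℝ 2 w) : Continuous (lapl w) := by
  unfold lapl pd
  have : ∀ e : E2, Continuous fun x => fderiv ℝ (fun x => fderiv ℝ w x e) x e := fun e =>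
    ((fd_contDiff hw e).continuous_fderiv (by norm_num)).clm_apply continuous_const
  exact (this _).add (this _)

lemma fd_symm {w : E2 → ℝ} (hw : ContDiff ℝ 2 w) (e e' y : E2) :
    fderiv ℝ (fun y => fderiv ℝ w y e) y e' = fderiv ℝ (fun y => fderiv ℝ w y e') y e := by
  have h := (hw.contDiffAt (x := y)).isSymmSndFDerivAt (by simp)
  have hd : DifferentiableAt ℝ (fderiv ℝ w) y :=
    (hw.fderiv_right (m := 1) (by norm_num)).differentiable (by norm_num) y
  have : ∀ e, fderiv ℝ (fun y => fderiv ℝ w y e) y = (fderiv ℝ (fderiv ℝ w) y).flip e := by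
    intro e
    ext v
    rw [fderiv_clm_apply hd (by fun_prop)]
    simp
  rw [this, this]
  exact h _ _

lemma single_inner (z : E2) (j : Fin 2) : inner ℝ z (EuclideanSpace.single j (1:ℝ)) = z j := by
  simp [EuclideanSpace.inner_single_right]

lemma normsq (z : E2) : ‖z‖^2 = z 0^2 + z 1^2 := by
  rw [EuclideanSpace.norm_sq_eq]; simp

lemma idA {ρ ε : ℝ} (hρ : 0 < ρ) (hε : 0 < ε) (x : E2) {w : E2 → ℝ}
    (hw : ContDiff ℝ 2 w) (hc : HasCompactSupport w) :
    ∫ y, NN ρ ε (y-x) * w y = (∫ y, PP ρ ε (y-x) * w y) + ∫ y, KK ρ ε (y-x) * (-(lapl w y)) := by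
  have hG : Continuous fun y : E2 => GG ρ ε (y-x) := (GG_cont ρ hε).comp (by fun_prop)
  have hH : Continuous fun y : E2 => HH ρ ε (y-x) := (HH_cont ρ hε).comp (by fun_prop)
  have hK : Continuous fun y : E2 => KK ρ ε (y-x) := (KK_cont ρ hε).comp (by fun_prop)
  have hN : Continuous fun y : E2 => NN ρ ε (y-x) := (NN_cont ρ hε).comp (by fun_prop)
  have hP : Continuous fun y : E2 => PP ρ ε (y-x) := (PP_cont ρ hε).comp (by fun_prop)
  have key : ∀ j : Fin 2, ∫ y, KK ρ ε (y-x) * pd j (pd j w) y =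
      - ∫ y, (GG ρ ε (y-x) - ((y-x) j)^2 * HH ρ ε (y-x)) * w y := by
    intro j
    have h1 := L1 (ρ := ρ) hε x (EuclideanSpace.single j 1) (fd_contDiff hw (EuclideanSpace.single j 1))
      (hc.fderiv_apply (𝕜 := ℝ) _)
    have h2 := L2 hρ hε x (EuclideanSpace.single j 1) (EuclideanSpace.single j 1) (hw.of_le (by norm_num)) hc
    have h3 : ∀ y, pd j (pd j w) y = fderiv ℝ (fun y => fderiv ℝ w y (EuclideanSpace.single j 1)) y (EuclideanSpace.single j 1) := fun y => rfl
    simp_rw [h3]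
    rw [h1, h2]
    simp_rw [single_inner]
    congr 2; ext y; rw [show (EuclideanSpace.single j (1:ℝ) : E2) j = 1 by simp]; ring
  have hint : ∀ j : Fin 2, Integrable fun y => KK ρ ε (y-x) * pd j (pd j w) y := fun j =>
    int_mul_c hK (((fd_contDiff hw (EuclideanSpace.single j 1)).continuous_fderiv (by norm_num)).clm_apply continuous_const)
     (HasCompactSupport.fderiv_apply (𝕜 := ℝ) (hc.fderiv_apply (𝕜 := ℝ) (EuclideanSpace.single j 1)) (EuclideanSpace.single j 1))
  have hint2 : ∀ j : Fin 2, Integrable fun y => (GG ρ ε (y-x) - ((y-x) j)^2 * HH ρ ε (y-x)) * w y :=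
    fun j => int_mul_c (by fun_prop) hw.continuous hc
  have hint3 : Integrable fun y => (GG ρ ε (y-x) - ((y-x) 0)^2 * HH ρ ε (y-x)) * w y + (GG ρ ε (y-x) - ((y-x) 1)^2 * HH ρ ε (y-x)) * w y :=
    (hint2 0).add (hint2 1)
  have e1 : ∫ y, KK ρ ε (y-x) * (-(lapl w y)) =
      -((∫ y, KK ρ ε (y-x) * pd 0 (pd 0 w) y) + ∫ y, KK ρ ε (y-x) * pd 1 (pd 1 w) y) := by
    rw [← integral_add (hint 0) (hint 1), ← integral_neg]
    congr 1; ext y; simp [lapl]; ring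
  rw [e1, key, key, ← neg_add, neg_neg, ← integral_add (hint2 0) (hint2 1), ← integral_add
    (int_mul_c hP hw.continuous hc) hint3]
  congr 1; ext y
  have := tr_eq hρ hε (y-x)
  rw [normsq] at this
  linear_combination (w y) * this

lemma idB {ρ ε : ℝ} (hρ : 0 < ρ) (hε : 0 < ε) (x e : E2) {w : E2 → ℝ}
    (hw : ContDiff ℝ 2 w) (hc : HasCompactSupport w) :
    ∫ y, NN ρ ε (y-x) * fderiv ℝ w y e = (∫ y, PP ρ ε (y-x) * fderiv ℝ w y e)
      + ∫ y, (inner ℝ (y-x) e * GG ρ ε (y-x)) * (-(lapl w y)) := by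
  have hG : Continuous fun y : E2 => GG ρ ε (y-x) := (GG_cont ρ hε).comp (by fun_prop)
  have hH : Continuous fun y : E2 => HH ρ ε (y-x) := (HH_cont ρ hε).comp (by fun_prop)
  have hP : Continuous fun y : E2 => PP ρ ε (y-x) := (PP_cont ρ hε).comp (by fun_prop)
  have hce : ∀ e, HasCompactSupport (fun y => fderiv ℝ w y e) := fun e => hc.fderiv_apply (𝕜 := ℝ) e
  have key : ∀ j : Fin 2, ∫ y, (inner ℝ (y-x) e * GG ρ ε (y-x)) * pd j (pd j w) y =
      - ∫ y, (GG ρ ε (y-x) - ((y-x) j)^2 * HH ρ ε (y-x)) * fderiv ℝ w y e := by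
    intro j
    set ej : E2 := EuclideanSpace.single j 1 with hej
    have h1 := L2 hρ hε x e ej (fd_contDiff hw ej) (hce ej)
    have h2 := L2 hρ hε x ej e (fd_contDiff hw ej) (hce ej)
    have h4 := L2 hρ hε x ej ej (fd_contDiff hw e) (hce e)
    have h3 : ∀ y, pd j (pd j w) y = fderiv ℝ (fun y => fderiv ℝ w y ej) y ej := fun y => rfl
    simp_rw [h3]
    rw [h1]
    have h5 : ∀ y : E2, (inner ℝ e ej * GG ρ ε (y-x) - inner ℝ (y-x) e * inner ℝ (y-x) ej * HH ρ ε (y-x))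
       = inner ℝ ej e * GG ρ ε (y-x) - inner ℝ (y-x) ej * inner ℝ (y-x) e * HH ρ ε (y-x) := by
      intro y; rw [real_inner_comm]; ring
    simp_rw [h5]
    rw [← h2]
    simp_rw [fd_symm hw ej e]
    rw [h4]
    simp_rw [hej, single_inner]
    congr 2; ext y; rw [show (EuclideanSpace.single j (1:ℝ) : E2) j = 1 by simp]; ring
  have hint : ∀ j : Fin 2, Integrable fun y => (inner ℝ (y-x) e * GG ρ ε (y-x)) * pd j (pd j w) y := fun j =>
    int_mul_c (by fun_prop) (((fd_contDiff hw (EuclideanSpace.single j 1)).continuous_fderiv (by norm_num)).clm_apply continuous_const)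
     (HasCompactSupport.fderiv_apply (𝕜 := ℝ) (hce (EuclideanSpace.single j 1)) (EuclideanSpace.single j 1))
  have hwe := (fd_contDiff hw e).continuous
  have hint2 : ∀ j : Fin 2, Integrable fun y => (GG ρ ε (y-x) - ((y-x) j)^2 * HH ρ ε (y-x)) * fderiv ℝ w y e :=
    fun j => int_mul_c (by fun_prop) hwe (hce e)
  have hint3 : Integrable fun y => (GG ρ ε (y-x) - ((y-x) 0)^2 * HH ρ ε (y-x)) * fderiv ℝ w y e + (GG ρ ε (y-x) - ((y-x) 1)^2 * HH ρ ε (y-x)) * fderiv ℝ w y e :=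
    (hint2 0).add (hint2 1)
  have e1 : ∫ y, (inner ℝ (y-x) e * GG ρ ε (y-x)) * (-(lapl w y)) =
      -((∫ y, (inner ℝ (y-x) e * GG ρ ε (y-x)) * pd 0 (pd 0 w) y) + ∫ y, (inner ℝ (y-x) e * GG ρ ε (y-x)) * pd 1 (pd 1 w) y) := by
    rw [← integral_add (hint 0) (hint 1), ← integral_neg]
    congr 1; ext y; simp [lapl]; ring
  rw [e1, key, key, ← neg_add, neg_neg, ← integral_add (hint2 0) (hint2 1), ← integral_add
    (int_mul_c hP hwe (hce e)) hint3]
  congr 1; ext y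
  have := tr_eq hρ hε (y-x)
  rw [normsq] at this
  linear_combination (fderiv ℝ w y e) * this


lemma vball : (volume : Measure E2).real (ball 0 1) = Real.pi := by
  rw [Measure.real, EuclideanSpace.volume_ball_fin_two]
  simp [Real.pi_pos.le]

lemma fr2 : Module.finrank ℝ E2 = 2 := by simp

noncomputable def bub (z : E2) : ℝ := 2/(‖z‖^2+1)^2

lemma bub_cont : Continuous bub := by
  unfold bub
  exact Continuous.div (by fun_prop) (by fun_prop) (fun z => by positivity)

lemma bub_pos (z : E2) : 0 < bub z := by unfold bub; positivity

lemma bub_aux : IntegrableOn (fun y : ℝ => y * (2/(y^2+1)^2)) (Set.Ioi 0) volume ∧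
    ∫ y in Set.Ioi (0:ℝ), y * (2/(y^2+1)^2) = 1 := by
  have hd : ∀ x ∈ Set.Ioi (0:ℝ), HasDerivAt (fun y : ℝ => -(y^2+1)⁻¹) (x * (2/(x^2+1)^2)) x := by
    intro x _
    have h1 : HasDerivAt (fun y : ℝ => y^2+1) (2*x) x := by
      simpa using (hasDerivAt_pow 2 x).add_const (1:ℝ)
    have := (h1.inv (by positivity)).neg
    exact this.congr_deriv (by field_simp)
  have hc : ContinuousWithinAt (fun y : ℝ => -(y^2+1)⁻¹) (Set.Ici 0) 0 := by
    apply Continuous.continuousWithinAt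
    exact (Continuous.inv₀ (by fun_prop) (fun y => by positivity)).neg
  have ht : Tendsto (fun y : ℝ => -(y^2+1)⁻¹) atTop (nhds 0) := by
    have : Tendsto (fun y : ℝ => y^2+1) atTop atTop :=
      tendsto_atTop_add_const_right _ _ (tendsto_pow_atTop (by norm_num))
    simpa using this.inv_tendsto_atTop.neg
  have hn : ∀ x ∈ Set.Ioi (0:ℝ), 0 ≤ x * (2/(x^2+1)^2) := by
    intro x hx
    have : (0:ℝ) < x := hx
    positivity
  exact ⟨integrableOn_Ioi_deriv_of_nonneg hc hd hn ht, by
    rw [integral_Ioi_of_hasDerivAt_of_nonneg hc hd hn ht]; simp⟩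

lemma bub_int : Integrable bub := by
  have := (integrable_fun_norm_addHaar (E := E2) volume (f := fun y : ℝ => 2/(y^2+1)^2)).2
    (by rw [fr2]; simpa using bub_aux.1)
  exact this

lemma bub_integral : ∫ z, bub z = 2 * Real.pi := by
  have := integral_fun_norm_addHaar (E := E2) volume (fun y : ℝ => 2/(y^2+1)^2)
  rw [fr2, vball] at this
  simp only [Nat.add_one_sub_one, pow_one, smul_eq_mul, bub_aux.2] at this
  change ∫ z, bub z = _ at this
  rw [this]; simp

lemma NN_sub {ρ η : ℝ} (hη : 0 < η) (x : E2) (g : E2 → ℝ) :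
    ∫ y, NN ρ (η^2) (y-x) * g y = ∫ ζ, qq ρ (η • ζ)^3 * bub ζ * g (x + η • ζ) := by
  have h1 : ∫ y, NN ρ (η^2) (y-x) * g y = ∫ z, NN ρ (η^2) z * g (x+z) := by
    rw [← integral_add_right_eq_self _ x]
    congr 1; ext z; rw [add_sub_cancel_right, add_comm]
  have h2 := Measure.integral_comp_smul (volume : Measure E2) (fun z => NN ρ (η^2) z * g (x+z)) η
  rw [fr2, abs_of_pos (by positivity)] at h2
  rw [h1]
  have h3 : ∫ z, NN ρ (η^2) z * g (x+z) = η^2 * ∫ ζ, NN ρ (η^2) (η • ζ) * g (x+ η • ζ) := by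
    rw [h2, smul_eq_mul, mul_inv_cancel_left₀ (by positivity)]
  rw [h3, ← integral_const_mul]
  congr 1; ext ζ
  unfold NN bub
  rw [norm_smul, Real.norm_of_nonneg hη.le]
  field_simp

lemma NN_nonneg (ρ : ℝ) {ε : ℝ} (hε : 0 < ε) (z : E2) : 0 ≤ NN ρ ε z := by
  unfold NN
  have := qq_nonneg ρ z
  positivity

lemma qq3 (ρ : ℝ) (z : E2) : 0 ≤ qq ρ z^3 ∧ qq ρ z^3 ≤ 1 :=
  ⟨pow_nonneg (qq_nonneg _ _) _, pow_le_one₀ (qq_nonneg _ _) (qq_le_one _ _)⟩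
lemma qq2 (ρ : ℝ) (z : E2) : 0 ≤ qq ρ z^2 ∧ qq ρ z^2 ≤ 1 :=
  ⟨pow_nonneg (qq_nonneg _ _) _, pow_le_one₀ (qq_nonneg _ _) (qq_le_one _ _)⟩

lemma NN_bound {ρ η B : ℝ} (hη : 0 < η) (x : E2) {g : E2 → ℝ} (hB : ∀ y, |g y| ≤ B) :
    |∫ y, NN ρ (η^2) (y-x) * g y| ≤ 2 * Real.pi * B := by
  rw [NN_sub hη, ← bub_integral, ← integral_mul_const]
  rw [← Real.norm_eq_abs]
  refine norm_integral_le_of_norm_le (bub_int.mul_const _) (Eventually.of_forall fun ζ => ?_)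
  rw [Real.norm_eq_abs, abs_mul, abs_mul, abs_of_nonneg (qq3 _ _).1, abs_of_pos (bub_pos _)]
  have := (qq3 ρ (η • ζ))
  have h2 := bub_pos ζ
  have h3 := hB (x + η • ζ)
  calc qq ρ (η • ζ)^3 * bub ζ * |g (x + η • ζ)| ≤ 1 * bub ζ * B := by gcongr; exact this.2
    _ = _ := by ring

lemma Lim1 {ρ : ℝ} (x : E2) {g : E2 → ℝ} (hg : Continuous g) (hc : HasCompactSupport g) :
    Tendsto (fun η : ℝ => ∫ y, NN ρ (η^2) (y-x) * g y) (nhdsWithin 0 (Set.Ioi 0))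
      (nhds (2 * Real.pi * g x)) := by
  obtain ⟨B, hB⟩ := hg.bounded_above_of_compact_support hc
  have h0 : 2 * Real.pi * g x = ∫ ζ, bub ζ * g x := by rw [integral_mul_const, bub_integral]
  rw [h0]
  have h1 : (fun η : ℝ => ∫ ζ, qq ρ (η • ζ)^3 * bub ζ * g (x + η • ζ)) =ᶠ[nhdsWithin 0 (Set.Ioi 0)]
    (fun η : ℝ => ∫ y, NN ρ (η^2) (y-x) * g y) := by
    filter_upwards [self_mem_nhdsWithin] with η hη
    rw [NN_sub hη]
  refine Tendsto.congr' h1 ?_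
  refine tendsto_integral_filter_of_dominated_convergence (fun ζ => bub ζ * B) ?_ ?_ (bub_int.mul_const _) ?_
  · refine Eventually.of_forall fun η => Continuous.aestronglyMeasurable ?_
    exact ((((qq_cont ρ).comp (by fun_prop)).pow 3).mul bub_cont).mul (hg.comp (by fun_prop))
  · refine Eventually.of_forall fun η => Eventually.of_forall fun ζ => ?_
    rw [norm_mul, norm_mul]
    rw [Real.norm_of_nonneg (qq3 _ _).1, Real.norm_of_nonneg (bub_pos _).le]
    have := (qq3 ρ (η • ζ))
    have h2 := bub_pos ζ
    have h3 := hB (x + η • ζ)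
    calc qq ρ (η • ζ)^3 * bub ζ * ‖g (x + η • ζ)‖ ≤ 1 * bub ζ * B := by gcongr; exact this.2
      _ = _ := by ring
  · refine Eventually.of_forall fun ζ => ?_
    have : Continuous fun η : ℝ => qq ρ (η • ζ)^3 * bub ζ * g (x + η • ζ) :=
      ((((qq_cont ρ).comp (by fun_prop)).pow 3).mul continuous_const).mul (hg.comp (by fun_prop))
    have h := (this.tendsto 0).mono_left (nhdsWithin_le_nhds (s := Set.Ioi 0))
    simpa [qq] using h

lemma PP_nonneg (ρ : ℝ) {ε : ℝ} (hε : 0 < ε) (z : E2) : 0 ≤ PP ρ ε z := by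
  unfold PP
  have := qq_nonneg ρ z
  positivity

lemma PP_le (ρ : ℝ) {ε : ℝ} (hε : 0 < ε) (z : E2) : PP ρ ε z ≤ 6/ρ^2 := by
  unfold PP
  have h1 := qq2 ρ z
  have h2 : ‖z‖^2/(‖z‖^2+ε) ≤ 1 := by rw [div_le_one (sε_pos hε z)]; linarith
  have h3 : 0 ≤ ‖z‖^2/(‖z‖^2+ε) := by positivity
  calc 6/ρ^2 * qq ρ z^2 * (‖z‖^2/(‖z‖^2+ε)) ≤ 6/ρ^2 * 1 * 1 := by gcongr; exact h1.2
    _ = _ := by ring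

lemma Lim2 {ρ : ℝ} (x : E2) {g : E2 → ℝ} (hg : Continuous g) (hc : HasCompactSupport g) :
    Tendsto (fun η : ℝ => ∫ y, PP ρ (η^2) (y-x) * g y) (nhdsWithin 0 (Set.Ioi 0))
      (nhds (∫ y, 6/ρ^2 * qq ρ (y-x)^2 * g y)) := by
  refine tendsto_integral_filter_of_dominated_convergence (fun y => 6/ρ^2 * ‖g y‖) ?_ ?_
    ((hg.integrable_of_hasCompactSupport hc).norm.const_mul _) ?_
  · filter_upwards [self_mem_nhdsWithin] with η hη
    have : (0:ℝ) < η := hη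
    exact (((PP_cont ρ (by positivity)).comp (by fun_prop)).mul hg).aestronglyMeasurable
  · filter_upwards [self_mem_nhdsWithin] with η hη
    have : (0:ℝ) < η := hη
    have h2 : 0 < η^2 := by positivity
    refine Eventually.of_forall fun y => ?_
    rw [norm_mul, Real.norm_of_nonneg (PP_nonneg ρ h2 _)]
    gcongr
    exact PP_le ρ h2 _
  · have : ∀ᵐ y : E2, y ≠ x := by
      simp [ae_iff]
    filter_upwards [this] with y hy
    have hyx : 0 < ‖y - x‖ := norm_pos_iff.2 (sub_ne_zero.2 hy)
    have : Tendsto (fun η : ℝ => ‖y-x‖^2/(‖y-x‖^2+η^2)) (nhds 0) (nhds (‖y-x‖^2/(‖y-x‖^2+0^2))) := by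
      apply ContinuousAt.tendsto
      apply ContinuousAt.div (by fun_prop) (by fun_prop)
      positivity
    rw [show ‖y-x‖^2/(‖y-x‖^2+0^2) = 1 by field_simp; simp] at this
    have := (this.const_mul (6/ρ^2 * qq ρ (y-x)^2)).mul_const (g y)
    rw [mul_one] at this
    exact this.mono_left nhdsWithin_le_nhds


noncomputable def inv1 (z : E2) : ℝ := if ‖z‖ < 1 then 1/‖z‖ else 0

lemma inv1_nonneg (z : E2) : 0 ≤ inv1 z := by unfold inv1; split_ifs <;> positivity

lemma inv1_meas : Measurable inv1 := by
  unfold inv1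
  exact Measurable.ite (measurableSet_lt (by fun_prop) (by fun_prop)) (by fun_prop) (by fun_prop)

lemma inv_le (z : E2) : 1/‖z‖ ≤ 1 + inv1 z := by
  unfold inv1
  split_ifs with h
  · linarith
  · have : (1:ℝ) ≤ ‖z‖ := not_lt.1 h
    rw [add_zero, div_le_one (by linarith)]; exact this

lemma log_inv_le (z : E2) : Real.posLog (1/‖z‖) ≤ inv1 z := by
  unfold inv1
  split_ifs with h
  · rcases eq_or_ne z 0 with rfl | hz
    · simp
    · have : 0 < ‖z‖ := norm_pos_iff.2 hz
      rw [Real.posLog_eq_log (by rw [abs_of_pos (by positivity), le_div_iff₀ this]; linarith)]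
      exact (Real.log_le_sub_one_of_pos (by positivity)).trans (by linarith)
  · have : (1:ℝ) ≤ ‖z‖ := not_lt.1 h
    rw [Real.posLog_eq_zero_iff _ |>.2]
    rw [abs_of_pos (by positivity), div_le_one (by linarith)]; exact this

lemma inv1_aux : (fun y : ℝ => y * (if y < 1 then 1/y else 0)) =ᵐ[volume.restrict (Set.Ioi 0)]
    (Set.Ioo (0:ℝ) 1).indicator (fun _ => (1:ℝ)) := by
  filter_upwards [ae_restrict_mem measurableSet_Ioi] with y hy
  have : (0:ℝ) < y := hy
  simp only [Set.indicator, Set.mem_Ioo, this, true_and]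
  split_ifs
  · field_simp
  · simp

lemma inv1_int : Integrable inv1 := by
  refine (integrable_fun_norm_addHaar (E := E2) volume (f := fun y : ℝ => if y < 1 then 1/y else 0)).2 ?_
  rw [fr2]
  simp only [Nat.add_one_sub_one, pow_one, smul_eq_mul]
  unfold IntegrableOn
  rw [integrable_congr inv1_aux]
  apply Integrable.integrableOn
  rw [integrable_indicator_iff measurableSet_Ioo]
  simp

lemma inv1_integral : ∫ z, inv1 z = 2 * Real.pi := by
  have := integral_fun_norm_addHaar (E := E2) volume (fun y : ℝ => if y < 1 then 1/y else 0)
  rw [fr2, vball] at this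
  simp only [Nat.add_one_sub_one, pow_one, smul_eq_mul] at this
  rw [integral_congr_ae inv1_aux, integral_indicator measurableSet_Ioo, Measure.restrict_restrict measurableSet_Ioo] at this
  change ∫ z, inv1 z = _ at this
  rw [this]
  have : Set.Ioo (0:ℝ) 1 ∩ Set.Ioi 0 = Set.Ioo 0 1 := by
    ext y; simp; intros; assumption
  rw [this]
  simp

noncomputable def fd (t : ℝ) (w : E2 → ℝ) : E2 → ℝ := (ball (0:E2) (15*t)).indicator (fun y => -lapl w y)
noncomputable def mu (t : ℝ) (w : E2 → ℝ) : Measure E2 := volume.withDensity (fun y => ENNReal.ofReal (fd t w y))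

structure Core (a b M C1 C2 : ℝ) (t ω W0 : ℝ) (w W : E2 → ℝ) : Prop where
  ht : 1 ≤ t
  ha : 0 < a
  hb : 0 < b
  hM : 0 < M
  hC1 : 0 < C1
  hC2 : 0 < C2
  hω : 0 ≤ ω
  hw : ContDiff ℝ 2 w
  hc : HasCompactSupport w
  wpos : ∀ y ∈ ball (0:E2) (15*t), 0 ≤ w y
  wH : ∀ y ∈ ball (0:E2) (15*t), w y ≤ w 0
  pde : ∀ y ∈ ball (0:E2) (15*t), -lapl w y = W y * Real.exp (w y - w 0)
  Wpos : ∀ y ∈ ball (0:E2) (15*t), 0 ≤ W y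
  Wb : ∀ y ∈ ball (0:E2) (15*t), W y ≤ b
  Wω : ∀ y ∈ ball (0:E2) (15*t), |W y - W0| ≤ ω
  aW : a ≤ W0
  Wb0 : W0 ≤ b
  mass : ∫ y in ball (0:E2) (15*t), -lapl w y ≤ M
  mass8 : ∫ y in ball (0:E2) (8*t), -lapl w y ≤ 8 * Real.pi + Real.pi/2
  c1 : ∀ x : E2, ‖x‖ = t → w x ≤ C1
  c2 : ∀ x : E2, ‖x‖ = 8*t → w x ≤ C2

namespace Core

lemma tpos {a b M C1 C2 : ℝ} {t ω W0 : ℝ} {w W : E2 → ℝ}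
    (h : Core a b M C1 C2 t ω W0 w W) : 0 < t := lt_of_lt_of_le one_pos h.ht

lemma fd_nonneg {a b M C1 C2 : ℝ} {t ω W0 : ℝ} {w W : E2 → ℝ}
    (h : Core a b M C1 C2 t ω W0 w W) (y : E2) : 0 ≤ fd t w y := by
  unfold fd
  refine Set.indicator_nonneg (fun y hy => ?_) y
  rw [h.pde y hy]
  exact mul_nonneg (h.Wpos y hy) (Real.exp_pos _).le

lemma fd_le {a b M C1 C2 : ℝ} {t ω W0 : ℝ} {w W : E2 → ℝ}
    (h : Core a b M C1 C2 t ω W0 w W) (y : E2) : fd t w y ≤ b := by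
  unfold fd
  refine Set.indicator_le' (fun y hy => ?_) (fun _ _ => h.hb.le) y
  rw [h.pde y hy]
  have h1 : Real.exp (w y - w 0) ≤ 1 := Real.exp_le_one_iff.2 (by linarith [h.wH y hy])
  have := h.Wb y hy
  have := h.Wpos y hy
  have h3 := h.hb
  nlinarith [Real.exp_pos (w y - w 0)]

lemma fd_meas {a b M C1 C2 : ℝ} {t ω W0 : ℝ} {w W : E2 → ℝ}
    (h : Core a b M C1 C2 t ω W0 w W) : Measurable (fd t w) :=
  (lapl_cont h.hw).neg.measurable.indicator measurableSet_ball

lemma lapl_intOn {a b M C1 C2 : ℝ} {t ω W0 : ℝ} {w W : E2 → ℝ}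
    (h : Core a b M C1 C2 t ω W0 w W) (s : ℝ) : IntegrableOn (fun y => -lapl w y) (ball (0:E2) s) :=
  ((lapl_cont h.hw).neg.locallyIntegrable.integrableOn_isCompact (isCompact_closedBall 0 s)).mono_set
    ball_subset_closedBall

lemma fd_int {a b M C1 C2 : ℝ} {t ω W0 : ℝ} {w W : E2 → ℝ}
    (h : Core a b M C1 C2 t ω W0 w W) : Integrable (fd t w) := (h.lapl_intOn _).integrable_indicator measurableSet_ball

lemma mu_le {a b M C1 C2 : ℝ} {t ω W0 : ℝ} {w W : E2 → ℝ}
    (h : Core a b M C1 C2 t ω W0 w W) : mu t w ≤ ENNReal.ofReal b • volume := by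
  unfold mu
  rw [← withDensity_const]
  exact withDensity_mono (Eventually.of_forall fun y => ENNReal.ofReal_le_ofReal (h.fd_le y))

lemma int_mu {a b M C1 C2 : ℝ} {t ω W0 : ℝ} {w W : E2 → ℝ}
    (h : Core a b M C1 C2 t ω W0 w W) (g : E2 → ℝ) : ∫ y, g y ∂(mu t w) = ∫ y, fd t w y * g y := by
  unfold mu
  rw [integral_withDensity_eq_integral_toReal_smul (h.fd_meas.ennreal_ofReal) (by simp)]
  simp_rw [ENNReal.toReal_ofReal (h.fd_nonneg _), smul_eq_mul]

lemma fin {a b M C1 C2 : ℝ} {t ω W0 : ℝ} {w W : E2 → ℝ}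
    (h : Core a b M C1 C2 t ω W0 w W) : IsFiniteMeasure (mu t w) :=
  isFiniteMeasure_withDensity_ofReal h.fd_int.2

lemma mu_real {a b M C1 C2 : ℝ} {t ω W0 : ℝ} {w W : E2 → ℝ}
    (h : Core a b M C1 C2 t ω W0 w W) {S : Set E2} (hS : MeasurableSet S) : (mu t w).real S = ∫ y in S, fd t w y := by
  have := h.int_mu (S.indicator 1)
  rw [integral_indicator_one hS] at this
  rw [this, ← integral_indicator hS]
  congr 1; ext y; simp [Set.indicator]

lemma mu_univ {a b M C1 C2 : ℝ} {t ω W0 : ℝ} {w W : E2 → ℝ}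
    (h : Core a b M C1 C2 t ω W0 w W) : (mu t w).real Set.univ ≤ M := by
  rw [h.mu_real MeasurableSet.univ, setIntegral_univ]
  unfold fd
  rw [integral_indicator measurableSet_ball]
  exact h.mass

lemma mu_S {a b M C1 C2 : ℝ} {t ω W0 : ℝ} {w W : E2 → ℝ}
    (h : Core a b M C1 C2 t ω W0 w W) (S : Set E2) : (mu t w).real S ≤ M :=
  haveI := h.fin
  (measureReal_mono (Set.subset_univ _)).trans h.mu_univ

lemma mu_8 {a b M C1 C2 : ℝ} {t ω W0 : ℝ} {w W : E2 → ℝ}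
    (h : Core a b M C1 C2 t ω W0 w W) : (mu t w).real (ball 0 (8*t)) ≤ 8 * Real.pi + Real.pi/2 := by
  rw [h.mu_real measurableSet_ball]
  refine le_trans (le_of_eq ?_) h.mass8
  refine setIntegral_congr_fun measurableSet_ball (fun y hy => ?_)
  unfold fd
  rw [Set.indicator_of_mem]
  exact ball_subset_ball (by linarith [h.tpos]) hy

lemma lapl_mu {a b M C1 C2 : ℝ} {t ω W0 : ℝ} {w W : E2 → ℝ}
    (h : Core a b M C1 C2 t ω W0 w W) {g : E2 → ℝ} (hg : ∀ y, 15*t ≤ ‖y‖ → g y = 0) :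
    ∫ y, g y * (-lapl w y) = ∫ y, g y ∂(mu t w) := by
  rw [h.int_mu]
  congr 1; ext y
  unfold fd
  by_cases hy : y ∈ ball (0:E2) (15*t)
  · rw [Set.indicator_of_mem hy]; ring
  · rw [Set.indicator_of_notMem hy, hg y (by simpa using hy)]; simp

lemma mu_int {a b M C1 C2 : ℝ} {t ω W0 : ℝ} {w W : E2 → ℝ}
    (h : Core a b M C1 C2 t ω W0 w W) {g : E2 → ℝ} (hg : Integrable g) : Integrable g (mu t w) :=
  (hg.smul_measure ENNReal.ofReal_ne_top).mono_measure h.mu_le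

lemma mu_integral_le {a b M C1 C2 : ℝ} {t ω W0 : ℝ} {w W : E2 → ℝ}
    (h : Core a b M C1 C2 t ω W0 w W) {g : E2 → ℝ} (hg : Integrable g) (h0 : ∀ y, 0 ≤ g y) :
    ∫ y, g y ∂(mu t w) ≤ b * ∫ y, g y := by
  refine (integral_mono_measure h.mu_le (Eventually.of_forall h0) (hg.smul_measure ENNReal.ofReal_ne_top)).trans ?_
  rw [integral_smul_measure, ENNReal.toReal_ofReal h.hb.le, smul_eq_mul]

lemma inv1_mu {a b M C1 C2 : ℝ} {t ω W0 : ℝ} {w W : E2 → ℝ}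
    (h : Core a b M C1 C2 t ω W0 w W) (x : E2) : Integrable (fun y => inv1 (y-x)) (mu t w) :=
  h.mu_int (inv1_int.comp_sub_right x)

lemma inv1_mu_le {a b M C1 C2 : ℝ} {t ω W0 : ℝ} {w W : E2 → ℝ}
    (h : Core a b M C1 C2 t ω W0 w W) (x : E2) : ∫ y, inv1 (y-x) ∂(mu t w) ≤ 2 * Real.pi * b := by
  refine (h.mu_integral_le (inv1_int.comp_sub_right x) (fun _ => inv1_nonneg _)).trans (le_of_eq ?_)
  rw [integral_sub_right_eq_self inv1, inv1_integral]; ring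

end Core


lemma KK_nonneg {ρ ε : ℝ} (hρ : 0 < ρ) (hε : 0 < ε) (z : E2) : 0 ≤ KK ρ ε z := kk_nonneg hρ hε _

lemma KK_le {ρ ε : ℝ} (hρ : 0 < ρ) (hε : 0 < ε) {z : E2} (hz : z ≠ 0) :
    KK ρ ε z ≤ Real.posLog (ρ/‖z‖) := by
  have hz' : 0 < ‖z‖ := norm_pos_iff.2 hz
  by_cases h : ρ ≤ ‖z‖
  · rw [KK_zero hρ h]; exact Real.posLog_nonneg
  · push Not at h
    have := kk_upper hρ hε (s := ‖z‖^2) (by positivity) (by gcongr)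
    refine this.trans ?_
    rw [← div_pow, Real.log_pow]
    have h2 : Real.log (ρ/‖z‖) ≤ Real.posLog (ρ/‖z‖) := le_max_right _ _
    push_cast
    linarith

lemma KK_ge1 {ρ : ℝ} (hρ : 0 < ρ) (z : E2) : Real.log (ρ/(1+‖z‖)) - 3/2 ≤ KK ρ 1 z := by
  by_cases h : ρ ≤ ‖z‖
  · have h1 := KK_nonneg hρ one_pos z
    have : Real.log (ρ/(1+‖z‖)) ≤ 0 := Real.log_nonpos (by positivity) (by
      rw [div_le_one (by positivity)]; linarith)
    linarith
  · push Not at h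
    have := kk_lower hρ one_pos (s := ‖z‖^2) (by positivity) (by gcongr)
    refine le_trans ?_ this
    have h3 : Real.log ((ρ/(1+‖z‖))^2) ≤ Real.log ((ρ^2+1)/(‖z‖^2+1)) := by
      apply Real.log_le_log (by positivity)
      rw [div_pow]
      gcongr
      · linarith
      · nlinarith [norm_nonneg z]
    rw [Real.log_pow] at h3
    push_cast at h3
    linarith

namespace Core
set_option linter.unusedSectionVars false

lemma far {a b M C1 C2 : ℝ} {t ω W0 : ℝ} {w W : E2 → ℝ}
    (h : Core a b M C1 C2 t ω W0 w W) {ρ : ℝ} {x y : E2} (hx : ‖x‖ + ρ ≤ 15*t) (hy : 15*t ≤ ‖y‖) : ρ ≤ ‖y-x‖ := by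
  have := norm_sub_norm_le y x
  linarith

lemma idA' {a b M C1 C2 : ℝ} {t ω W0 : ℝ} {w W : E2 → ℝ}
    (h : Core a b M C1 C2 t ω W0 w W) {ρ ε : ℝ} (hρ : 0 < ρ) (hε : 0 < ε) (x : E2) (hx : ‖x‖ + ρ ≤ 15*t) :
    ∫ y, NN ρ ε (y-x) * w y = (∫ y, PP ρ ε (y-x) * w y) + ∫ y, KK ρ ε (y-x) ∂(mu t w) := by
  rw [idA hρ hε x h.hw h.hc, h.lapl_mu]
  intro y hy
  exact KK_zero hρ (h.far hx hy)

lemma PPw_nonneg {a b M C1 C2 : ℝ} {t ω W0 : ℝ} {w W : E2 → ℝ}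
    (h : Core a b M C1 C2 t ω W0 w W) {ρ ε : ℝ} (hρ : 0 < ρ) (hε : 0 < ε) (x : E2) (hx : ‖x‖ + ρ ≤ 15*t) :
    0 ≤ ∫ y, PP ρ ε (y-x) * w y := by
  refine integral_nonneg fun y => ?_
  by_cases hy : 15*t ≤ ‖y‖
  · simp [PP_zero hρ (h.far hx hy)]
  · exact mul_nonneg (PP_nonneg _ hε _) (h.wpos y (by simpa using hy))

lemma S0 {a b M C1 C2 : ℝ} {t ω W0 : ℝ} {w W : E2 → ℝ}
    (h : Core a b M C1 C2 t ω W0 w W) : ∫ y in ball (0:E2) (12*t), w y ≤ (2*Real.pi*C1*(196/6)*(196/27)^2) * t^2 := by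
  have ht := h.tpos
  set x : E2 := EuclideanSpace.single 0 t with hxd
  have hx : ‖x‖ = t := by rw [hxd, EuclideanSpace.norm_single, Real.norm_of_nonneg ht.le]
  have hρ : 0 < 14*t := by linarith
  have hxρ : ‖x‖ + 14*t ≤ 15*t := by rw [hx]; linarith
  have l1 := Lim1 (ρ := 14*t) x h.hw.continuous h.hc
  have l2 := Lim2 (ρ := 14*t) x h.hw.continuous h.hc
  have h3 : ∫ y, 6/(14*t)^2 * qq (14*t) (y-x)^2 * w y ≤ 2 * Real.pi * w x := by
    refine le_of_tendsto_of_tendsto l2 l1 ?_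
    filter_upwards [self_mem_nhdsWithin] with η hη
    have : (0:ℝ) < η := hη
    rw [h.idA' hρ (by positivity) x hxρ]
    have : 0 ≤ ∫ y, KK (14*t) (η^2) (y-x) ∂(mu t w) :=
      integral_nonneg fun y => KK_nonneg hρ (by positivity) _
    linarith
  have hwi : IntegrableOn w (ball (0:E2) (12*t)) := (h.hw.continuous.integrable_of_hasCompactSupport h.hc).integrableOn
  have h4 : ∫ y, (ball (0:E2) (12*t)).indicator (fun y => 6/(14*t)^2 * (27/196)^2 * w y) y ≤ ∫ y, 6/(14*t)^2 * qq (14*t) (y-x)^2 * w y := by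
    refine integral_mono ?_ ?_ ?_
    · exact IntegrableOn.integrable_indicator (hwi.const_mul _) measurableSet_ball
    · exact int_mul_c ((((qq_cont _).comp (by fun_prop)).pow 2).const_mul _) h.hw.continuous h.hc
    · intro y
      by_cases hy : y ∈ ball (0:E2) (12*t)
      · rw [Set.indicator_of_mem hy]
        have hy' : ‖y‖ < 12*t := by simpa using hy
        have hyx : ‖y - x‖ ≤ 13*t := by
          have := norm_sub_le y x
          linarith
        have hq : 27/196 ≤ qq (14*t) (y-x) := by
          unfold qq
          apply le_max_of_le_left
          have : ‖y-x‖^2/(14*t)^2 ≤ 169/196 := by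
            rw [div_le_iff₀ (by positivity)]
            nlinarith [norm_nonneg (y-x)]
          linarith
        have hw0 := h.wpos y (ball_subset_ball (by linarith) hy)
        dsimp only
        gcongr
      · rw [Set.indicator_of_notMem hy]
        by_cases hy : 15*t ≤ ‖y‖
        · simp [qq_zero hρ (h.far hxρ hy)]
        · have := h.wpos y (by simpa using hy)
          have := qq_nonneg (14*t) (y-x)
          positivity
  rw [integral_indicator measurableSet_ball, integral_const_mul] at h4
  have h5 := h.c1 x hx
  have h6 : 6/(14*t)^2 * (27/196)^2 * ∫ y in ball (0:E2) (12*t), w y ≤ 2 * Real.pi * C1 :=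
    (h4.trans h3).trans (by gcongr)
  have : (∫ y in ball (0:E2) (12*t), w y) = (196/6)*(196/27)^2 * t^2 * (6/(14*t)^2 * (27/196)^2 * ∫ y in ball (0:E2) (12*t), w y) := by
    field_simp; norm_num
  rw [this]
  calc _ ≤ (196/6)*(196/27)^2 * t^2 * (2 * Real.pi * C1) := by gcongr
    _ = _ := by ring

lemma ae_ne {a b M C1 C2 : ℝ} {t ω W0 : ℝ} {w W : E2 → ℝ}
    (h : Core a b M C1 C2 t ω W0 w W) (x : E2) : ∀ᵐ y ∂(mu t w), y - x ≠ 0 := by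
  have h1 : mu t w ≪ volume := withDensity_absolutelyContinuous _ _
  apply h1.ae_le
  have : ∀ᵐ y : E2, y ≠ x := by simp [ae_iff]
  filter_upwards [this] with y hy
  exact sub_ne_zero.2 hy

lemma posLog_le {a b M C1 C2 : ℝ} {t ω W0 : ℝ} {w W : E2 → ℝ}
    (h : Core a b M C1 C2 t ω W0 w W) {ρ : ℝ} (z : E2) : Real.posLog (ρ/‖z‖) ≤ Real.posLog ρ + inv1 z := by
  rw [div_eq_mul_one_div]
  exact (Real.posLog_mul).trans (by linarith [log_inv_le z])

lemma posLog_int {a b M C1 C2 : ℝ} {t ω W0 : ℝ} {w W : E2 → ℝ}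
    (h : Core a b M C1 C2 t ω W0 w W) (ρ : ℝ) (x : E2) : Integrable (fun y => Real.posLog (ρ/‖y-x‖)) (mu t w) := by
  have := h.fin
  refine Integrable.mono' ((integrable_const (Real.posLog ρ)).add (h.inv1_mu x)) ?_ ?_
  · apply Measurable.aestronglyMeasurable
    unfold Real.posLog
    fun_prop
  · refine Eventually.of_forall fun y => ?_
    rw [Real.norm_of_nonneg Real.posLog_nonneg]
    exact h.posLog_le _

lemma KK_int {a b M C1 C2 : ℝ} {t ω W0 : ℝ} {w W : E2 → ℝ}
    (h : Core a b M C1 C2 t ω W0 w W) {ρ ε : ℝ} (hρ : 0 < ρ) (hε : 0 < ε) (x : E2) : Integrable (fun y => KK ρ ε (y-x)) (mu t w) := by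
  refine Integrable.mono' (h.posLog_int ρ x) ((KK_cont ρ hε).comp (by fun_prop)).aestronglyMeasurable ?_
  filter_upwards [h.ae_ne x] with y hy
  rw [Real.norm_of_nonneg (KK_nonneg hρ hε _)]
  exact KK_le hρ hε hy

lemma PPw_le {a b M C1 C2 : ℝ} {t ω W0 : ℝ} {w W : E2 → ℝ}
    (h : Core a b M C1 C2 t ω W0 w W) {ε : ℝ} (hε : 0 < ε) (x : E2) (hx : ‖x‖ ≤ 8*t) :
    ∫ y, PP (4*t) ε (y-x) * w y ≤ 6/16 * (2*Real.pi*C1*(196/6)*(196/27)^2) := by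
  have ht := h.tpos
  have hρ : 0 < 4*t := by linarith
  have hwi : IntegrableOn w (ball (0:E2) (12*t)) := (h.hw.continuous.integrable_of_hasCompactSupport h.hc).integrableOn
  have h4 : ∫ y, PP (4*t) ε (y-x) * w y ≤ ∫ y, (ball (0:E2) (12*t)).indicator (fun y => 6/(4*t)^2 * w y) y := by
    refine integral_mono ?_ ?_ ?_
    · exact int_mul_c ((PP_cont _ hε).comp (by fun_prop)) h.hw.continuous h.hc
    · exact IntegrableOn.integrable_indicator (hwi.const_mul _) measurableSet_ball
    · intro y
      by_cases hy : y ∈ ball (0:E2) (12*t)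
      · rw [Set.indicator_of_mem hy]
        have hw0 := h.wpos y (ball_subset_ball (by linarith) hy)
        dsimp only
        gcongr
        exact PP_le _ hε _
      · rw [Set.indicator_of_notMem hy]
        have hy' : 12*t ≤ ‖y‖ := by simpa using hy
        have := norm_sub_norm_le y x
        simp [PP_zero hρ (ε := ε) (z := y-x) (by linarith)]
  rw [integral_indicator measurableSet_ball, integral_const_mul] at h4
  refine h4.trans ?_
  calc _ ≤ 6/(4*t)^2 * ((2*Real.pi*C1*(196/6)*(196/27)^2) * t^2) := by gcongr; exact h.S0
    _ = _ := by field_simp; norm_num; ring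

lemma S1 {a b M C1 C2 : ℝ} {t ω W0 : ℝ} {w W : E2 → ℝ}
    (h : Core a b M C1 C2 t ω W0 w W) (x : E2) (hx : ‖x‖ ≤ 8*t) :
    2 * Real.pi * w x ≤ 6/16 * (2*Real.pi*C1*(196/6)*(196/27)^2) + ∫ y, Real.posLog (4*t/‖y-x‖) ∂(mu t w) := by
  have ht := h.tpos
  have hρ : 0 < 4*t := by linarith
  refine le_of_tendsto (Lim1 (ρ := 4*t) x h.hw.continuous h.hc) ?_
  filter_upwards [self_mem_nhdsWithin] with η hη
  have h0 : (0:ℝ) < η := hη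
  have hε : 0 < η^2 := by positivity
  rw [h.idA' hρ hε x (by linarith)]
  have h1 := h.PPw_le hε x hx
  have h2 : ∫ y, KK (4*t) (η^2) (y-x) ∂(mu t w) ≤ ∫ y, Real.posLog (4*t/‖y-x‖) ∂(mu t w) := by
    refine integral_mono_ae (h.KK_int hρ hε x) (h.posLog_int _ x) ?_
    filter_upwards [h.ae_ne x] with y hy
    exact KK_le hρ hε hy
  linarith

lemma S1' {a b M C1 C2 : ℝ} {t ω W0 : ℝ} {w W : E2 → ℝ}
    (h : Core a b M C1 C2 t ω W0 w W) : ∫ y, KK (4*t) 1 y ∂(mu t w) ≤ 2 * Real.pi * w 0 := by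
  have ht := h.tpos
  have hρ : 0 < 4*t := by linarith
  have h1 := h.idA' hρ one_pos 0 (by simp; linarith)
  have h2 := h.PPw_nonneg hρ one_pos 0 (by simp; linarith)
  have h3 := NN_bound (ρ := 4*t) (one_pos) (0:E2) (g := (ball (0:E2) (15*t)).indicator w) (B := w 0) (by
    intro y
    by_cases hy : y ∈ ball (0:E2) (15*t)
    · rw [Set.indicator_of_mem hy, abs_of_nonneg (h.wpos y hy)]; exact h.wH y hy
    · rw [Set.indicator_of_notMem hy]; simp; exact h.wpos 0 (by simp; linarith))
  have h4 : ∫ y, NN (4*t) (1^2) (y-0) * (ball (0:E2) (15*t)).indicator w y = ∫ y, NN (4*t) 1 (y-0) * w y := by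
    congr 1; ext y
    rw [one_pow]
    by_cases hy : y ∈ ball (0:E2) (15*t)
    · rw [Set.indicator_of_mem hy]
    · rw [NN_zero hρ (z := y-0)]
      · simp
      · have : 15*t ≤ ‖y‖ := by simpa using hy
        simp; linarith
  rw [h4] at h3
  simp only [sub_zero] at h1 h2 h3
  linarith [le_abs_self (∫ y, NN (4*t) 1 y * w y)]

lemma S2 {a b M C1 C2 : ℝ} {t ω W0 : ℝ} {w W : E2 → ℝ}
    (h : Core a b M C1 C2 t ω W0 w W) (x : E2) (hx : ‖x‖ = 8*t) :
    (mu t w).real (ball x (Real.exp (-(2*C2+5/2)) * (4*t))) ≤ Real.pi := by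
  have := h.fin
  have ht := h.tpos
  have hρ : 0 < 4*t := by linarith
  set l := Real.exp (-(2*C2+5/2)) with hl
  have hl0 : 0 < l := Real.exp_pos _
  have hl1 : l ≤ 1 := Real.exp_le_one_iff.2 (by linarith [h.hC2])
  set m := (mu t w).real (ball x (l * (4*t))) with hm
  have hm0 : 0 ≤ m := measureReal_nonneg
  have lim : Tendsto (fun η : ℝ => ((1/2) * Real.log (((4*t)^2+η^2)/((l*(4*t))^2+η^2)) - 3/2) * m) (nhdsWithin 0 (Set.Ioi 0)) (nhds (((1/2) * Real.log (((4*t)^2+0^2)/((l*(4*t))^2+0^2)) - 3/2) * m)) := by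
    apply Tendsto.mono_left _ nhdsWithin_le_nhds
    apply ContinuousAt.tendsto
    have hd : ContinuousAt (fun η : ℝ => ((4*t)^2+η^2)/((l*(4*t))^2+η^2)) 0 :=
      ContinuousAt.div (by fun_prop) (by fun_prop) (by positivity)
    exact (((hd.log (by positivity)).const_mul _).sub continuousAt_const).mul_const _
  have e1 : (1/2) * Real.log (((4*t)^2+0^2)/((l*(4*t))^2+0^2)) - 3/2 = 2*C2+1 := by
    rw [show ((4*t)^2+0^2)/((l*(4*t))^2+0^2) = (l⁻¹)^2 by field_simp; norm_num, Real.log_pow, Real.log_inv, hl, Real.log_exp]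
    push_cast; ring
  rw [e1] at lim
  have key : (2*C2+1)*m ≤ 2 * Real.pi * w x := by
    refine le_of_tendsto_of_tendsto lim (Lim1 (ρ := 4*t) x h.hw.continuous h.hc) ?_
    filter_upwards [self_mem_nhdsWithin] with η hη
    have h0 : (0:ℝ) < η := hη
    have hε : 0 < η^2 := by positivity
    rw [h.idA' hρ hε x (by linarith)]
    have h1 := h.PPw_nonneg hρ hε x (by linarith)
    have h2 : ∫ y in ball x (l*(4*t)), ((1/2) * Real.log (((4*t)^2+η^2)/((l*(4*t))^2+η^2)) - 3/2) ∂(mu t w) ≤ ∫ y in ball x (l*(4*t)), KK (4*t) (η^2) (y-x) ∂(mu t w) := by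
      refine setIntegral_mono_on (integrableOn_const (by finiteness)) (h.KK_int hρ hε x).integrableOn measurableSet_ball ?_
      intro y hy
      have hy' : ‖y-x‖ < l*(4*t) := by simpa [dist_eq_norm] using hy
      refine le_trans ?_ (kk_lower hρ hε (by positivity) ?_)
      · gcongr
      · have : l*(4*t) ≤ 4*t := by nlinarith
        gcongr; linarith
    have h3 : ∫ y in ball x (l*(4*t)), KK (4*t) (η^2) (y-x) ∂(mu t w) ≤ ∫ y, KK (4*t) (η^2) (y-x) ∂(mu t w) :=
      setIntegral_le_integral (h.KK_int hρ hε x) (Eventually.of_forall fun y => KK_nonneg hρ hε _)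
    rw [setIntegral_const, smul_eq_mul, mul_comm] at h2
    linarith
  have h5 := h.c2 x hx
  have h6 := h.hC2
  have hp := Real.pi_pos
  have : (2*C2+1)*m ≤ (2*C2+1) * Real.pi := by
    calc _ ≤ 2 * Real.pi * C2 := key.trans (by gcongr)
      _ ≤ _ := by nlinarith
  exact le_of_mul_le_mul_left this (by linarith)

end Core


lemma GG_nonneg (ρ : ℝ) {ε : ℝ} (hε : 0 < ε) (z : E2) : 0 ≤ GG ρ ε z := by
  unfold GG
  have := qq_nonneg ρ z
  positivity

lemma GG_le (ρ : ℝ) {ε : ℝ} (hε : 0 < ε) (z : E2) : GG ρ ε z * ‖z‖^2 ≤ 1 := by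
  unfold GG
  rw [div_mul_eq_mul_div, div_le_one (sε_pos hε z)]
  nlinarith [(qq3 ρ z).2, (qq3 ρ z).1, sq_nonneg ‖z‖]

lemma GGin (ρ : ℝ) {ε : ℝ} (hε : 0 < ε) (z e : E2) : |inner ℝ z e * GG ρ ε z| ≤ ‖e‖ * (1 + inv1 z) := by
  rw [abs_mul, abs_of_nonneg (GG_nonneg ρ hε z)]
  have h1 := abs_real_inner_le_norm z e
  have h2 := GG_nonneg ρ hε z
  have h3 : ‖z‖ * GG ρ ε z ≤ 1/‖z‖ := by
    rcases eq_or_ne z 0 with rfl | hz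
    · simp
    · have hz : 0 < ‖z‖ := norm_pos_iff.2 hz
      rw [le_div_iff₀ hz]
      have := GG_le ρ hε z
      nlinarith
  calc _ ≤ (‖z‖ * ‖e‖) * GG ρ ε z := by gcongr
    _ = ‖e‖ * (‖z‖ * GG ρ ε z) := by ring
    _ ≤ _ := by gcongr; exact h3.trans (inv_le z)

lemma qq2_hasFDerivAt {ρ : ℝ} (hρ : 0 < ρ) (z : E2) :
    HasFDerivAt (fun z => qq ρ z^2) (-(4/ρ^2*qq ρ z) • innerSL ℝ z) z := by
  have h1 := (hasStrictFDerivAt_norm_sq z).hasFDerivAt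
  have h3 : HasDerivAt (fun s : ℝ => 1 - s/ρ^2) (-(1/ρ^2)) (‖z‖^2) := by
    simpa using ((hasDerivAt_id (‖z‖^2)).div_const (ρ^2)).const_sub 1
  have h4 := (hasDerivAt_maxpow 0 (1 - ‖z‖^2/ρ^2)).comp (‖z‖^2) h3
  have h2 := h4.comp_hasFDerivAt z h1
  refine h2.congr_fderiv ?_
  ext e
  simp [qq]
  field_simp
  ring

namespace Core
set_option linter.unusedSectionVars false

lemma Lbd {a b M C1 C2 : ℝ} {t ω W0 : ℝ} {w W : E2 → ℝ}
    (h : Core a b M C1 C2 t ω W0 w W) (x : E2) (hx : ‖x‖ ≤ 8*t) (e : E2) :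
    |∫ y, 6/(4*t)^2 * qq (4*t) (y-x)^2 * fderiv ℝ w y e| ≤
      24/64 * (2*Real.pi*C1*(196/6)*(196/27)^2) * ‖e‖ / t := by
  have ht := h.tpos
  have hρ : 0 < 4*t := by linarith
  have hq : Continuous fun y : E2 => qq (4*t) (y-x) := (qq_cont _).comp (by fun_prop)
  have h1 := byparts (f := fun y => qq (4*t) (y-x)^2) (f' := fun y => -(4/(4*t)^2*qq (4*t) (y-x)) • innerSL ℝ (y-x))
    (fun y => HasFDerivAt.subc (f := fun z => qq (4*t) z^2) (qq2_hasFDerivAt hρ (y-x))) e (by simp; fun_prop)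
    (h.hw.of_le (by norm_num)) h.hc
  have h2 : ∫ y, 6/(4*t)^2 * qq (4*t) (y-x)^2 * fderiv ℝ w y e = 6/(4*t)^2 * ∫ y, qq (4*t) (y-x)^2 * fderiv ℝ w y e := by
    rw [← integral_const_mul]; congr 1; ext y; ring
  rw [h2, h1, ← integral_neg]
  have hwi : IntegrableOn w (ball (0:E2) (12*t)) := (h.hw.continuous.integrable_of_hasCompactSupport h.hc).integrableOn
  have h3 : |∫ y, -((-(4/(4*t)^2*qq (4*t) (y-x)) • innerSL ℝ (y-x)) e * w y)| ≤
     ∫ y, (ball (0:E2) (12*t)).indicator (fun y => 4/(4*t)^2 * ((4*t) * ‖e‖) * w y) y := by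
    rw [← Real.norm_eq_abs]
    refine norm_integral_le_of_norm_le (IntegrableOn.integrable_indicator (hwi.const_mul _) measurableSet_ball)
      (Eventually.of_forall fun y => ?_)
    have e1 : -((-(4/(4*t)^2*qq (4*t) (y-x)) • innerSL ℝ (y-x)) e * w y) = 4/(4*t)^2 * (qq (4*t) (y-x) * inner ℝ (y-x) e) * w y := by
      simp only [smul_apply, innerSL_apply_apply, smul_eq_mul]; ring
    rw [e1]
    by_cases hz : 4*t ≤ ‖y-x‖
    · rw [qq_zero hρ hz]
      simp only [zero_mul, mul_zero, norm_zero]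
      refine Set.indicator_nonneg (fun y hy => ?_) y
      have := h.wpos y (ball_subset_ball (by linarith) hy)
      positivity
    · push Not at hz
      have hy : y ∈ ball (0:E2) (12*t) := by
        have := norm_sub_norm_le y x
        simp; linarith
      rw [Set.indicator_of_mem hy]
      have hw0 := h.wpos y (ball_subset_ball (by linarith) hy)
      rw [norm_mul, norm_mul, norm_mul, Real.norm_of_nonneg hw0, Real.norm_of_nonneg (by positivity : 0 ≤ 4/(4*t)^2),
        Real.norm_of_nonneg (qq_nonneg _ _)]
      have i1 : ‖inner ℝ (y-x) e‖ ≤ ‖y-x‖ * ‖e‖ := norm_inner_le_norm _ _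
      have i2 : qq (4*t) (y-x) * ‖inner ℝ (y-x) e‖ ≤ (4*t) * ‖e‖ := by
        calc _ ≤ 1 * (‖y-x‖ * ‖e‖) := by gcongr; exact qq_le_one _ _
          _ ≤ _ := by rw [one_mul]; gcongr
      gcongr
  rw [integral_indicator measurableSet_ball, integral_const_mul] at h3
  rw [abs_mul, abs_of_pos (by positivity : 0 < 6/(4*t)^2)]
  have h0 := h.S0
  calc _ ≤ 6/(4*t)^2 * (4/(4*t)^2 * ((4*t) * ‖e‖) * ((2*Real.pi*C1*(196/6)*(196/27)^2) * t^2)) := by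
        refine mul_le_mul_of_nonneg_left (h3.trans ?_) (by positivity)
        gcongr
    _ = _ := by field_simp; norm_num; ring

lemma idB' {a b M C1 C2 : ℝ} {t ω W0 : ℝ} {w W : E2 → ℝ}
    (h : Core a b M C1 C2 t ω W0 w W) {ε : ℝ} (hε : 0 < ε) (x : E2) (hx : ‖x‖ ≤ 8*t) (e : E2) :
    ∫ y, NN (4*t) ε (y-x) * fderiv ℝ w y e = (∫ y, PP (4*t) ε (y-x) * fderiv ℝ w y e)
      + ∫ y, inner ℝ (y-x) e * GG (4*t) ε (y-x) ∂(mu t w) := by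
  have ht := h.tpos
  have hρ : 0 < 4*t := by linarith
  rw [idB hρ hε x e h.hw h.hc, h.lapl_mu]
  intro y hy
  rw [GG_zero hρ (h.far (by linarith) hy), mul_zero]

lemma fdc {a b M C1 C2 : ℝ} {t ω W0 : ℝ} {w W : E2 → ℝ}
    (h : Core a b M C1 C2 t ω W0 w W) (e : E2) : Continuous (fun y => fderiv ℝ w y e) := (fd_contDiff h.hw e).continuous
lemma fds {a b M C1 C2 : ℝ} {t ω W0 : ℝ} {w W : E2 → ℝ}
    (h : Core a b M C1 C2 t ω W0 w W) (e : E2) : HasCompactSupport (fun y => fderiv ℝ w y e) := h.hc.fderiv_apply (𝕜 := ℝ) e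

lemma GGlim {a b M C1 C2 : ℝ} {t ω W0 : ℝ} {w W : E2 → ℝ}
    (h : Core a b M C1 C2 t ω W0 w W) (x : E2) (hx : ‖x‖ ≤ 8*t) (e : E2) :
    Tendsto (fun η : ℝ => ∫ y, inner ℝ (y-x) e * GG (4*t) (η^2) (y-x) ∂(mu t w)) (nhdsWithin 0 (Set.Ioi 0))
    (nhds (2 * Real.pi * fderiv ℝ w x e - ∫ y, 6/(4*t)^2 * qq (4*t) (y-x)^2 * fderiv ℝ w y e)) := by
  refine Tendsto.congr' ?_ ((Lim1 (ρ := 4*t) x (h.fdc e) (h.fds e)).sub (Lim2 (ρ := 4*t) x (h.fdc e) (h.fds e)))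
  filter_upwards [self_mem_nhdsWithin] with η hη
  have h0 : (0:ℝ) < η := hη
  rw [h.idB' (by positivity) x hx e]; ring

lemma GGbd {a b M C1 C2 : ℝ} {t ω W0 : ℝ} {w W : E2 → ℝ}
    (h : Core a b M C1 C2 t ω W0 w W) {ε : ℝ} (hε : 0 < ε) (x e : E2) :
    |∫ y, inner ℝ (y-x) e * GG (4*t) ε (y-x) ∂(mu t w)| ≤ ‖e‖ * (M + 2*Real.pi*b) := by
  have := h.fin
  rw [← Real.norm_eq_abs]
  have hi : Integrable (fun y => ‖e‖ * (1 + inv1 (y-x))) (mu t w) := ((integrable_const (1:ℝ)).add (h.inv1_mu x)).const_mul _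
  refine (norm_integral_le_of_norm_le hi (Eventually.of_forall fun y => GGin _ hε _ _)).trans ?_
  rw [integral_const_mul, integral_add (integrable_const _) (h.inv1_mu x)]
  gcongr
  · simp; exact h.mu_univ
  · exact h.inv1_mu_le x

lemma S3 {a b M C1 C2 : ℝ} {t ω W0 : ℝ} {w W : E2 → ℝ}
    (h : Core a b M C1 C2 t ω W0 w W) (x : E2) (hx : ‖x‖ ≤ 8*t) (e : E2) :
    2 * Real.pi * |fderiv ℝ w x e| ≤ (24/64 * (2*Real.pi*C1*(196/6)*(196/27)^2) + M + 2*Real.pi*b) * ‖e‖ := by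
  have ht := h.tpos
  have h1 : |2 * Real.pi * fderiv ℝ w x e - ∫ y, 6/(4*t)^2 * qq (4*t) (y-x)^2 * fderiv ℝ w y e| ≤ ‖e‖ * (M + 2*Real.pi*b) := by
    refine le_of_tendsto (h.GGlim x hx e).abs ?_
    filter_upwards [self_mem_nhdsWithin] with η hη
    have h0 : (0:ℝ) < η := hη
    exact h.GGbd (by positivity) x e
  have h2 := h.Lbd x hx e
  have h3 : 24/64 * (2*Real.pi*C1*(196/6)*(196/27)^2) * ‖e‖ / t ≤ 24/64 * (2*Real.pi*C1*(196/6)*(196/27)^2) * ‖e‖ := by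
    apply div_le_self _ h.ht
    have := h.hC1
    have := Real.pi_pos
    positivity
  have h4 : 2 * Real.pi * |fderiv ℝ w x e| = |2 * Real.pi * fderiv ℝ w x e| := by
    rw [abs_mul, abs_of_pos Real.two_pi_pos]
  rw [h4]
  have h5 := abs_sub_abs_le_abs_sub (2 * Real.pi * fderiv ℝ w x e) (∫ y, 6/(4*t)^2 * qq (4*t) (y-x)^2 * fderiv ℝ w y e)
  linarith

lemma S3' {a b M C1 C2 : ℝ} {t ω W0 : ℝ} {w W : E2 → ℝ}
    (h : Core a b M C1 C2 t ω W0 w W) (x : E2) (hx : ‖x‖ ≤ 8*t) :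
    ‖fderiv ℝ w x‖ ≤ (24/64 * (2*Real.pi*C1*(196/6)*(196/27)^2) + M + 2*Real.pi*b) := by
  have hp := Real.pi_pos
  have := h.hC1
  have := h.hM
  have := h.hb
  refine ContinuousLinearMap.opNorm_le_bound _ (by positivity) (fun e => ?_)
  refine le_trans ?_ (h.S3 x hx e)
  rw [Real.norm_eq_abs]
  nlinarith [abs_nonneg (fderiv ℝ w x e), Real.pi_gt_three]

lemma S4 {a b M C1 C2 : ℝ} {t ω W0 : ℝ} {w W : E2 → ℝ}
    (h : Core a b M C1 C2 t ω W0 w W) (hω : ω ≤ a/2) : Real.pi * (a/2 * Real.exp (-(24/64 * (2*Real.pi*C1*(196/6)*(196/27)^2) + M + 2*Real.pi*b))) ≤ (mu t w).real (ball 0 1) := by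
  have ht := h.ht
  set G := (24/64 * (2*Real.pi*C1*(196/6)*(196/27)^2) + M + 2*Real.pi*b) with hG
  rw [h.mu_real measurableSet_ball]
  have h1 : ∫ y in ball (0:E2) 1, a/2 * Real.exp (-G) ≤ ∫ y in ball (0:E2) 1, fd t w y := by
    refine setIntegral_mono_on (integrableOn_const (by finiteness)) h.fd_int.integrableOn measurableSet_ball ?_
    intro y hy
    have hy1 : ‖y‖ < 1 := by simpa using hy
    have hy2 : y ∈ ball (0:E2) (15*t) := ball_subset_ball (by linarith) hy
    unfold fd
    rw [Set.indicator_of_mem hy2, h.pde y hy2]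
    have h3 := (convex_ball (0:E2) 1).norm_image_sub_le_of_norm_fderiv_le (f := w) (C := G) (𝕜 := ℝ)
      (fun x _ => (h.hw.differentiable (by norm_num)) x) (fun x hx => h.S3' x (by
        have : ‖x‖ < 1 := by simpa using hx
        linarith)) (mem_ball_self one_pos) hy
    rw [sub_zero, Real.norm_eq_abs] at h3
    have hG0 : 0 ≤ G := (norm_nonneg _).trans (h.S3' 0 (by simp; linarith))
    have h4 : -G ≤ w y - w 0 := by
      have := (abs_le.1 h3).1
      nlinarith
    have h5 := (abs_le.1 (h.Wω y hy2)).1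
    have := h.aW
    have := h.ha
    exact mul_le_mul (by linarith) (Real.exp_le_exp.2 h4) (Real.exp_pos _).le (by linarith)
  refine le_trans (le_of_eq ?_) h1
  rw [setIntegral_const, vball, smul_eq_mul]

end Core


noncomputable def XX (P : ℝ) (y : E2) : E2 := qq P y^2 • y
noncomputable def dv (P : ℝ) (y : E2) : ℝ := 2*qq P y^2 - 4/P^2*qq P y*‖y‖^2

lemma XX_cont (P : ℝ) : Continuous (XX P) := by
  unfold XX; exact ((qq_cont P).pow 2).smul continuous_id
lemma dv_cont (P : ℝ) : Continuous (dv P) := by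
  unfold dv; have := qq_cont P; fun_prop
lemma XX_zero {P : ℝ} (hP : 0 < P) {y : E2} (hy : P ≤ ‖y‖) : XX P y = 0 := by simp [XX, qq_zero hP hy]
lemma dv_zero {P : ℝ} (hP : 0 < P) {y : E2} (hy : P ≤ ‖y‖) : dv P y = 0 := by simp [dv, qq_zero hP hy]
lemma XX_norm_le (P : ℝ) (y : E2) : ‖XX P y‖ ≤ ‖y‖ := by
  unfold XX
  rw [norm_smul, Real.norm_of_nonneg (qq2 _ _).1]
  have := (qq2 P y).2
  nlinarith [norm_nonneg y]
lemma XX_norm_le' {P : ℝ} (hP : 0 < P) (y : E2) : ‖XX P y‖ ≤ P := by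
  by_cases hy : P ≤ ‖y‖
  · rw [XX_zero hP hy]; simp; exact hP.le
  · exact (XX_norm_le P y).trans (by linarith)

lemma qq_in {P : ℝ} (hP : 0 < P) {y : E2} (hy : ‖y‖ ≤ P) : qq P y = 1 - ‖y‖^2/P^2 := by
  unfold qq
  apply max_eq_left
  rw [sub_nonneg, div_le_one (by positivity)]
  gcongr

lemma dv_in {P : ℝ} (hP : 0 < P) {y : E2} (hy : ‖y‖ ≤ P) :
    dv P y = 2*(1-‖y‖^2/P^2)*(1-3*(‖y‖^2/P^2)) := by
  unfold dv; rw [qq_in hP hy]; ring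

lemma tau01 {P : ℝ} (hP : 0 < P) {y : E2} (hy : ‖y‖ ≤ P) : 0 ≤ ‖y‖^2/P^2 ∧ ‖y‖^2/P^2 ≤ 1 := by
  constructor
  · positivity
  · rw [div_le_one (by positivity)]; gcongr

lemma dv_ge {P : ℝ} (hP : 0 < P) (y : E2) : -1 ≤ dv P y := by
  by_cases hy : P ≤ ‖y‖
  · rw [dv_zero hP hy]; norm_num
  · push Not at hy
    rw [dv_in hP hy.le]
    obtain ⟨h1, h2⟩ := tau01 hP hy.le
    set s := ‖y‖^2/P^2
    nlinarith [sq_nonneg (s - 2/3)]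

lemma dv_abs {P : ℝ} (hP : 0 < P) (y : E2) : |dv P y| ≤ 4 := by
  have := dv_ge hP y
  rw [abs_le]
  refine ⟨by linarith, ?_⟩
  by_cases hy : P ≤ ‖y‖
  · rw [dv_zero hP hy]; norm_num
  · push Not at hy
    rw [dv_in hP hy.le]
    obtain ⟨h1, h2⟩ := tau01 hP hy.le
    set s := ‖y‖^2/P^2
    nlinarith

lemma dv_ge_in {R l : ℝ} (hR : 0 < R) (hl : 1 ≤ l) {y : E2} (hy : ‖y‖ < R) : 2 - 8/l^2 ≤ dv (l*R) y := by
  have hP : 0 < l*R := by positivity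
  have hy2 : ‖y‖ ≤ l*R := by nlinarith
  rw [dv_in hP hy2]
  obtain ⟨h1, h2⟩ := tau01 hP hy2
  have h3 : ‖y‖^2/(l*R)^2 ≤ 1/l^2 := by
    rw [div_le_div_iff₀ (by positivity) (by positivity), mul_pow]
    have : ‖y‖^2 ≤ R^2 := by gcongr
    nlinarith [sq_nonneg l]
  rw [show 8/l^2 = 8*(1/l^2) by ring]
  set s := ‖y‖^2/(l*R)^2
  nlinarith

lemma qq_anti {P : ℝ} {x y : E2} (h : ‖x‖ ≤ ‖y‖) : qq P y ≤ qq P x := by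
  unfold qq
  gcongr

lemma XX_mono (P : ℝ) (x y : E2) : inner ℝ (y-x) (XX P y - XX P x) ≤ ‖y-x‖^2 := by
  have e1 : inner ℝ (y-x) (XX P y - XX P x) = qq P y^2 * ‖y‖^2 + qq P x^2*‖x‖^2 - (qq P x^2 + qq P y^2) * inner ℝ x y := by
    unfold XX
    simp only [inner_sub_left, inner_sub_right, inner_smul_right, real_inner_self_eq_norm_sq, real_inner_comm x y]
    ring
  rw [e1, norm_sub_sq_real, real_inner_comm x y]
  have h1 := real_inner_le_norm x y
  have ha := qq2 P x
  have hb := qq2 P y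
  have key : 0 ≤ (‖y‖-‖x‖)*((1-qq P y^2)*‖y‖ - (1-qq P x^2)*‖x‖) := by
    rcases le_total ‖x‖ ‖y‖ with h | h
    · have h3 : qq P y^2 ≤ qq P x^2 := pow_le_pow_left₀ (qq_nonneg _ _) (qq_anti h) 2
      apply mul_nonneg (by linarith)
      have : (1-qq P x^2)*‖x‖ ≤ (1-qq P y^2)*‖y‖ := by
        apply mul_le_mul (by linarith) h (norm_nonneg _) (by linarith)
      linarith
    · have h3 : qq P x^2 ≤ qq P y^2 := pow_le_pow_left₀ (qq_nonneg _ _) (qq_anti h) 2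
      apply mul_nonneg_of_nonpos_of_nonpos (by linarith)
      have : (1-qq P y^2)*‖y‖ ≤ (1-qq P x^2)*‖x‖ := by
        apply mul_le_mul (by linarith) h (norm_nonneg _) (by linarith)
      linarith
  nlinarith [mul_nonneg (by linarith : 0 ≤ (1-qq P x^2) + (1-qq P y^2)) (by linarith : 0 ≤ ‖x‖*‖y‖ - inner ℝ x y)]

lemma byparts2 {f g : E2 → ℝ} {f' : E2 → (E2 →L[ℝ] ℝ)} (hf : ∀ y, HasFDerivAt f (f' y) y)
    (e : E2) (hf'c : Continuous fun y => f' y e) (hc : HasCompactSupport f)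
    (hg : ContDiff ℝ 1 g) :
    ∫ y, f y * fderiv ℝ g y e = - ∫ y, f' y e * g y := by
  have hfc : Continuous f := continuous_iff_continuousAt.2 fun z => (hf z).continuousAt
  have h1 : ∀ y, fderiv ℝ f y = f' y := fun y => (hf y).fderiv
  have hgd : Continuous fun y => fderiv ℝ g y e :=
    (hg.continuous_fderiv (by norm_num)).clm_apply continuous_const
  have hc' : HasCompactSupport fun y => f' y e := by
    simp_rw [← h1]; exact hc.fderiv_apply (𝕜 := ℝ) e
  have := integral_mul_fderiv_eq_neg_fderiv_mul_of_integrable (μ := volume) (f := f) (g := g) (v := e)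
    (by simp_rw [h1]; exact (hf'c.mul hg.continuous).integrable_of_hasCompactSupport hc'.mul_right)
    ((hfc.mul hgd).integrable_of_hasCompactSupport hc.mul_right)
    ((hfc.mul hg.continuous).integrable_of_hasCompactSupport hc.mul_right)
    (fun y _ => (hf y).differentiableAt) (fun y _ => hg.differentiable (by norm_num) y)
  simpa [h1] using this

lemma cs_of_zero {E : Type*} [Zero E] {P : ℝ} {f : E2 → E} (h : ∀ y, P ≤ ‖y‖ → f y = 0) : HasCompactSupport f :=
  HasCompactSupport.intro (isCompact_closedBall (0:E2) P) (fun y hy => h y (by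
    simp at hy; exact hy.le))

lemma div_id {P : ℝ} (hP : 0 < P) {g : E2 → ℝ} (hg : ContDiff ℝ 1 g) :
    ∫ y, fderiv ℝ g y (XX P y) = - ∫ y, dv P y * g y := by
  have hq := qq_cont P
  have hgd : ∀ e, Continuous fun y => fderiv ℝ g y e := fun e =>
    (hg.continuous_fderiv (by norm_num)).clm_apply continuous_const
  have hi : ∀ e y : E2, HasFDerivAt (fun y : E2 => inner ℝ y e) (innerSL ℝ e) y := by
    intro e y
    refine ((innerSL ℝ e).hasFDerivAt (x := y)).congr_of_eventuallyEq (Eventually.of_forall fun z => ?_)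
    simp [real_inner_comm]
  have key : ∀ j : Fin 2, ∫ y, (qq P y^2 * y j) * fderiv ℝ g y (EuclideanSpace.single j 1) =
      - ∫ y, (qq P y^2 - 4/P^2*qq P y*(y j)^2) * g y := by
    intro j
    have := byparts2 (f := fun y => qq P y^2 * inner ℝ y (EuclideanSpace.single j (1:ℝ)))
      (f' := fun y => (qq P y^2) • innerSL ℝ (EuclideanSpace.single j (1:ℝ)) +
        (inner ℝ y (EuclideanSpace.single j (1:ℝ)) : ℝ) • (-(4/P^2*qq P y) • innerSL ℝ y))
      (fun y => (qq2_hasFDerivAt hP y).mul (hi _ y)) (EuclideanSpace.single j 1) (by simp; fun_prop)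
      (cs_of_zero (P := P) (fun y hy => by simp [qq_zero hP hy])) hg
    simp_rw [single_inner] at this
    rw [this]
    congr 2; ext y
    simp only [smul_apply, add_apply, innerSL_apply_apply, smul_eq_mul, single_inner]
    rw [show (EuclideanSpace.single j (1:ℝ) : E2) j = 1 by simp]; ring
  have i1 : ∀ j : Fin 2, Integrable fun y : E2 => (qq P y^2 * y j) * fderiv ℝ g y (EuclideanSpace.single j 1) := by
    intro j
    have := hgd (EuclideanSpace.single j 1)
    exact Continuous.integrable_of_hasCompactSupport (by fun_prop)
      (cs_of_zero (P := P) (fun y hy => by simp [qq_zero hP hy]))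
  have i2 : ∀ j : Fin 2, Integrable fun y : E2 => (qq P y^2 - 4/P^2*qq P y*(y j)^2) * g y := by
    intro j
    have := hg.continuous
    exact Continuous.integrable_of_hasCompactSupport (by fun_prop)
      (cs_of_zero (P := P) (fun y hy => by simp [qq_zero hP hy]))
  have e1 : ∀ y : E2, fderiv ℝ g y (XX P y) = (qq P y^2 * y 0) * fderiv ℝ g y (EuclideanSpace.single 0 1)
      + (qq P y^2 * y 1) * fderiv ℝ g y (EuclideanSpace.single 1 1) := by
    intro y
    have : XX P y = (qq P y^2 * y 0) • (EuclideanSpace.single 0 (1:ℝ) : E2) + (qq P y^2 * y 1) • (EuclideanSpace.single 1 (1:ℝ) : E2) := by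
      ext j; fin_cases j <;> simp [XX]
    rw [this, map_add, map_smul, map_smul]; simp
  simp_rw [e1]
  rw [integral_add (i1 0) (i1 1), key, key, ← neg_add, ← integral_add (i2 0) (i2 1)]
  congr 2; ext y
  unfold dv
  rw [normsq]; ring


lemma GGz (ρ : ℝ) {η : ℝ} (hη : 0 < η) (z e : E2) : |inner ℝ z e * GG ρ (η^2) z| ≤ ‖e‖ / η := by
  have hε : 0 < η^2 := by positivity
  rw [abs_mul, abs_of_nonneg (GG_nonneg ρ hε z)]
  have h1 := abs_real_inner_le_norm z e
  have h3 : ‖z‖ * GG ρ (η^2) z ≤ 1/η := by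
    unfold GG
    rw [mul_div_assoc', div_le_div_iff₀ (sε_pos hε z) hη]
    have h4 := qq3 ρ z
    have h5 : ‖z‖ * qq ρ z^3 ≤ ‖z‖ := by nlinarith [norm_nonneg z]
    nlinarith [sq_nonneg (‖z‖-η), mul_nonneg (norm_nonneg z) hη.le]
  calc _ ≤ (‖z‖ * ‖e‖) * GG ρ (η^2) z := by gcongr; exact GG_nonneg _ hε _
    _ = ‖e‖ * (‖z‖ * GG ρ (η^2) z) := by ring
    _ ≤ ‖e‖ * (1/η) := by gcongr
    _ = _ := by ring

namespace Core
set_option linter.unusedSectionVars false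

lemma poh_a {a b M C1 C2 : ℝ} {t ω W0 : ℝ} {w W : E2 → ℝ}
    (h : Core a b M C1 C2 t ω W0 w W) {P G : ℝ} (hP : 0 < P) (hP8 : P ≤ 8*t) (hG : ∀ x : E2, ‖x‖ ≤ 8*t → ‖fderiv ℝ w x‖ ≤ G) :
    (∫ x, fderiv ℝ w x (XX P x) ∂(mu t w)) + ∫ x, dv P x ∂(mu t w) ≤ ω * (4 + G*P) * (P^2*Real.pi) := by
  have ht := h.tpos
  set E : E2 → ℝ := fun y => Real.exp (w y - w 0) with hE
  have hEd : ContDiff ℝ 1 E := ((h.hw.of_le (by norm_num)).sub contDiff_const).exp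
  have hEf : ∀ y e, fderiv ℝ E y e = E y * fderiv ℝ w y e := by
    intro y e
    have : HasFDerivAt E (E y • fderiv ℝ w y) y :=
      (((h.hw.differentiable (by norm_num)) y).hasFDerivAt.sub_const (w 0)).exp
    rw [this.fderiv]; simp
  have hid := div_id hP hEd
  simp_rw [hEf] at hid
  have hcw : Continuous fun y => fderiv ℝ w y (XX P y) :=
    ((h.hw.continuous_fderiv (by norm_num))).clm_apply (XX_cont P)
  have hdc := dv_cont P
  have hz : ∀ y : E2, P ≤ ‖y‖ → fderiv ℝ w y (XX P y) + dv P y = 0 := by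
    intro y hy; rw [XX_zero hP hy, dv_zero hP hy]; simp
  have i1 : Integrable fun y => fderiv ℝ w y (XX P y) := hcw.integrable_of_hasCompactSupport
    (cs_of_zero (P := P) fun y hy => by rw [XX_zero hP hy]; simp)
  have i2 : Integrable fun y => dv P y := hdc.integrable_of_hasCompactSupport
    (cs_of_zero (P := P) fun y hy => dv_zero hP hy)
  have i3 : Integrable fun y => E y * fderiv ℝ w y (XX P y) := (hEd.continuous.mul hcw).integrable_of_hasCompactSupport
    (cs_of_zero (P := P) fun y hy => by simp only [Pi.mul_apply]; rw [XX_zero hP hy]; simp)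
  have i4 : Integrable fun y => dv P y * E y := (hdc.mul hEd.continuous).integrable_of_hasCompactSupport
    (cs_of_zero (P := P) fun y hy => by simp only [Pi.mul_apply]; rw [dv_zero hP hy]; simp)
  rw [← integral_add (h.mu_int i1) (h.mu_int i2), h.int_mu]
  have e0 : ∫ y, W0 * (E y * fderiv ℝ w y (XX P y) + dv P y * E y) = 0 := by
    rw [integral_const_mul, integral_add i3 i4, hid]; simp
  have i5 : Integrable fun y => W0 * (E y * fderiv ℝ w y (XX P y) + dv P y * E y) := (i3.add i4).const_mul _
  have i6 : Integrable fun y => fd t w y * (fderiv ℝ w y (XX P y) + dv P y) := by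
    refine Integrable.bdd_mul (c := b) (i1.add i2) h.fd_meas.aestronglyMeasurable (Eventually.of_forall fun y => ?_)
    rw [Real.norm_of_nonneg (h.fd_nonneg y)]; exact h.fd_le y
  have hG0 : 0 ≤ G := (norm_nonneg _).trans (hG 0 (by simp; linarith))
  calc ∫ y, fd t w y * (fderiv ℝ w y (XX P y) + dv P y)
      = (∫ y, fd t w y * (fderiv ℝ w y (XX P y) + dv P y)) - ∫ y, W0 * (E y * fderiv ℝ w y (XX P y) + dv P y * E y) := by
        rw [e0, sub_zero]
    _ = ∫ y, (fd t w y - W0 * E y) * (fderiv ℝ w y (XX P y) + dv P y) := by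
        rw [← integral_sub i6 i5]; congr 1; ext y; ring
    _ ≤ ∫ y, (ball (0:E2) P).indicator (fun _ => ω * (4 + G*P)) y := by
        refine integral_mono ?_ ?_ ?_
        · refine (i6.sub i5).congr (Eventually.of_forall fun y => ?_)
          simp only [Pi.sub_apply]; ring
        · exact IntegrableOn.integrable_indicator (integrableOn_const (by finiteness)) measurableSet_ball
        · intro y
          by_cases hy : y ∈ ball (0:E2) P
          · rw [Set.indicator_of_mem hy]
            have hyP : ‖y‖ < P := by simpa using hy
            have hy2 : y ∈ ball (0:E2) (15*t) := ball_subset_ball (by linarith) hy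
            have f1 : fd t w y - W0 * E y = (W y - W0) * E y := by
              unfold fd
              rw [Set.indicator_of_mem hy2, h.pde y hy2]; ring
            dsimp only
            rw [f1]
            have g1 : |fderiv ℝ w y (XX P y)| ≤ G * P := by
              rw [← Real.norm_eq_abs]
              refine (ContinuousLinearMap.le_opNorm _ _).trans ?_
              exact mul_le_mul (hG y (by linarith)) (XX_norm_le' hP y) (norm_nonneg _) hG0
            have g2 := dv_abs hP y
            have g3 := h.Wω y hy2
            have g4 : E y ≤ 1 := Real.exp_le_one_iff.2 (by linarith [h.wH y hy2])
            have g5 : 0 ≤ E y := (Real.exp_pos _).le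
            calc (W y - W0) * E y * (fderiv ℝ w y (XX P y) + dv P y) ≤ |(W y - W0) * E y * (fderiv ℝ w y (XX P y) + dv P y)| := le_abs_self _
              _ = |W y - W0| * E y * |fderiv ℝ w y (XX P y) + dv P y| := by
                rw [abs_mul, abs_mul, abs_of_nonneg g5]
              _ ≤ ω * 1 * (4 + G*P) := by
                have g6 := abs_add_le (fderiv ℝ w y (XX P y)) (dv P y)
                have := h.hω
                gcongr
                linarith
              _ = _ := by ring
          · rw [Set.indicator_of_notMem hy]
            dsimp only
            rw [hz y (by simpa using hy), mul_zero]
    _ = _ := by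
        rw [integral_indicator measurableSet_ball, setIntegral_const, Measure.real, EuclideanSpace.volume_ball_fin_two]
        simp [hP.le, Real.pi_pos.le]; ring

lemma sym {a b M C1 C2 : ℝ} {t ω W0 : ℝ} {w W : E2 → ℝ}
    (h : Core a b M C1 C2 t ω W0 w W) {R l η : ℝ} (hR : 0 < R) (hl : 2 ≤ l) (hη : 0 < η) :
    -(1/2) * ((mu t w).real (ball 0 R)^2 + 2 * M * ((mu t w).real (ball 0 (l^2*R)) - (mu t w).real (ball 0 R)) + 2/l^2*M^2)
     ≤ ∫ x, ∫ y, inner ℝ (y-x) (XX (l*R) x) * GG (4*t) (η^2) (y-x) ∂(mu t w) ∂(mu t w) := by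
  have := h.fin
  have hε : 0 < η^2 := by positivity
  set μ := mu t w
  set P := l*R with hPd
  have hP : 0 < P := by positivity
  have hl2 : 4 ≤ l^2 := by nlinarith
  have hPO : P ≤ l^2*R := by rw [hPd]; nlinarith
  have hRO : R ≤ l^2*R := by nlinarith
  set k : E2 → E2 → ℝ := fun x y => inner ℝ (y-x) (XX P x) * GG (4*t) (η^2) (y-x) with hk
  have hkc : Continuous (fun p : E2 × E2 => k p.1 p.2) := by
    have h1 : Continuous fun p : E2 × E2 => GG (4*t) (η^2) (p.2-p.1) := (GG_cont _ hε).comp (by fun_prop)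
    have h2 : Continuous fun p : E2 × E2 => XX P p.1 := (XX_cont P).comp (by fun_prop)
    exact (Continuous.inner (by fun_prop) h2).mul h1
  have hki : Integrable (fun p : E2 × E2 => k p.1 p.2) (μ.prod μ) := by
    refine Integrable.mono' (integrable_const (P/η)) hkc.aestronglyMeasurable (Eventually.of_forall fun p => ?_)
    refine (GGz _ hη _ _).trans ?_
    gcongr
    exact XX_norm_le' hP _
  have hki' : Integrable (fun p : E2 × E2 => k p.2 p.1) (μ.prod μ) := hki.swap
  have e1 : ∫ x, ∫ y, k x y ∂μ ∂μ = ∫ p, k p.1 p.2 ∂(μ.prod μ) := (integral_prod _ hki).symm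
  have e2 : ∫ x, ∫ y, k x y ∂μ ∂μ = ∫ p, k p.2 p.1 ∂(μ.prod μ) := by
    rw [integral_integral_swap hki]; exact (integral_prod _ hki').symm
  change _ ≤ ∫ x, ∫ y, k x y ∂μ ∂μ
  set A : Set E2 := ball 0 (l^2*R) \ ball 0 R with hA
  set I : Set E2 := ball 0 R with hI
  have hAm : MeasurableSet A := measurableSet_ball.diff measurableSet_ball
  have hIm : MeasurableSet I := measurableSet_ball
  have hAr : μ.real A = μ.real (ball 0 (l^2*R)) - μ.real I :=
    measureReal_sdiff (ball_subset_ball hRO) measurableSet_ball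
  set B : E2 × E2 → ℝ := fun p => I.indicator 1 p.1 * I.indicator 1 p.2 + (A.indicator 1 p.1 * 1 + 1 * A.indicator 1 p.2) + 2/l^2 with hB
  have iI : Integrable (I.indicator (1 : E2 → ℝ)) μ := (integrable_const (1:ℝ)).indicator hIm
  have iA : Integrable (A.indicator (1 : E2 → ℝ)) μ := (integrable_const (1:ℝ)).indicator hAm
  have b1 : Integrable (fun p : E2 × E2 => I.indicator (1 : E2 → ℝ) p.1 * I.indicator (1 : E2 → ℝ) p.2) (μ.prod μ) := iI.mul_prod iI
  have b2 : Integrable (fun p : E2 × E2 => A.indicator (1 : E2 → ℝ) p.1 * 1) (μ.prod μ) := iA.mul_prod (integrable_const (1:ℝ))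
  have b3 : Integrable (fun p : E2 × E2 => 1 * A.indicator (1 : E2 → ℝ) p.2) (μ.prod μ) := (integrable_const (1:ℝ)).mul_prod iA
  have bI : ∫ p, B p ∂(μ.prod μ) = μ.real I^2 + 2 * μ.real Set.univ * μ.real A + 2/l^2 * μ.real Set.univ^2 := by
    have b23 : Integrable (fun p : E2 × E2 => A.indicator (1 : E2 → ℝ) p.1 * 1 + 1 * A.indicator (1 : E2 → ℝ) p.2) (μ.prod μ) := b2.add b3
    have b123 : Integrable (fun p : E2 × E2 => I.indicator (1 : E2 → ℝ) p.1 * I.indicator (1 : E2 → ℝ) p.2 + (A.indicator (1 : E2 → ℝ) p.1 * 1 + 1 * A.indicator (1 : E2 → ℝ) p.2)) (μ.prod μ) := b1.add b23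
    rw [hB]
    rw [integral_add b123 (integrable_const _), integral_add b1 b23, integral_add b2 b3]
    rw [integral_prod_mul (I.indicator (1 : E2 → ℝ)) (I.indicator (1 : E2 → ℝ)),
      integral_prod_mul (A.indicator (1 : E2 → ℝ)) (fun _ => (1:ℝ)), integral_prod_mul (fun _ => (1:ℝ)) (A.indicator (1 : E2 → ℝ)),
      integral_indicator_one hIm, integral_indicator_one hAm]
    simp only [integral_const, smul_eq_mul, mul_one]
    have hpu : (μ.prod μ).real Set.univ = μ.real Set.univ * μ.real Set.univ := by
      rw [← Set.univ_prod_univ]; exact measureReal_prod_prod _ _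
    rw [hpu]
    ring
  have point : ∀ p : E2 × E2, -(k p.1 p.2 + k p.2 p.1) ≤ B p := by
    rintro ⟨x, y⟩
    have hg : GG (4*t) (η^2) (x-y) = GG (4*t) (η^2) (y-x) := by
      unfold GG qq; rw [norm_sub_rev]
    have e3 : -(k x y + k y x) = inner ℝ (y-x) (XX P y - XX P x) * GG (4*t) (η^2) (y-x) := by
      simp only [hk]
      rw [hg, inner_sub_right, ← neg_sub y x, inner_neg_left]; ring
    have hG0 := GG_nonneg (4*t) hε (y-x)
    have hG1 := GG_le (4*t) hε (y-x)
    have one : -(k x y + k y x) ≤ 1 := by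
      rw [e3]
      have := XX_mono P x y
      nlinarith
    have small : ∀ u v : E2, ‖u‖ < R → l^2*R ≤ ‖v‖ → |inner ℝ (v-u) (XX P u)| * GG (4*t) (η^2) (v-u) ≤ 2/l^2 := by
      intro u v hu hv
      have h1 := abs_real_inner_le_norm (v-u) (XX P u)
      have h2 : ‖XX P u‖ ≤ R := (XX_norm_le P u).trans hu.le
      have h3 : l^2*R/2 ≤ ‖v-u‖ := by
        have := norm_sub_norm_le v u
        nlinarith
      have h5 : 0 < ‖v-u‖ := lt_of_lt_of_le (by positivity) h3
      have h4 : ‖v-u‖ * GG (4*t) (η^2) (v-u) ≤ 1/‖v-u‖ := by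
        rw [le_div_iff₀ h5]
        have := GG_le (4*t) hε (v-u)
        nlinarith
      have h6 := GG_nonneg (4*t) hε (v-u)
      calc _ ≤ (‖v-u‖ * R) * GG (4*t) (η^2) (v-u) := by
            gcongr; exact h1.trans (by gcongr)
        _ = R * (‖v-u‖ * GG (4*t) (η^2) (v-u)) := by ring
        _ ≤ R * (1/(l^2*R/2)) := by
            gcongr
            exact h4.trans (one_div_le_one_div_of_le (by positivity) h3)
        _ = 2/l^2 := by field_simp
    have n1 : ∀ (S : Set E2) (z : E2), 0 ≤ S.indicator (1 : E2 → ℝ) z := fun S z =>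
      Set.indicator_nonneg (fun _ _ => zero_le_one) z
    have hl0 : 0 ≤ 2/l^2 := by positivity
    change -(k x y + k y x) ≤ I.indicator 1 x * I.indicator 1 y + (A.indicator 1 x * 1 + 1 * A.indicator 1 y) + 2/l^2
    by_cases hxA : x ∈ A
    · rw [Set.indicator_of_mem hxA]
      have := mul_nonneg (n1 I x) (n1 I y)
      have := n1 A y
      simp only [Pi.one_apply]; linarith
    by_cases hyA : y ∈ A
    · rw [Set.indicator_of_mem hyA]
      have := mul_nonneg (n1 I x) (n1 I y)
      have := n1 A x
      simp only [Pi.one_apply]; linarith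
    have out : ∀ z : E2, z ∉ A → z ∉ I → l^2*R ≤ ‖z‖ := by
      intro z hz1 hz2
      by_contra hc
      push Not at hc
      exact hz1 ⟨by simpa using hc, hz2⟩
    rw [Set.indicator_of_notMem hxA, Set.indicator_of_notMem hyA]
    by_cases hxI : x ∈ I
    · by_cases hyI : y ∈ I
      · rw [Set.indicator_of_mem hxI, Set.indicator_of_mem hyI]
        simp only [Pi.one_apply]; linarith
      · have hy := out y hyA hyI
        have hx : ‖x‖ < R := by simpa [hI] using hxI
        rw [Set.indicator_of_notMem hyI, e3, XX_zero hP (hPO.trans hy), zero_sub, inner_neg_right]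
        have := small x y hx hy
        have h7 := neg_abs_le (inner ℝ (y-x) (XX P x))
        have : -inner ℝ (y-x) (XX P x) * GG (4*t) (η^2) (y-x) ≤ |inner ℝ (y-x) (XX P x)| * GG (4*t) (η^2) (y-x) := by
          gcongr; linarith
        linarith
    · have hx := out x hxA hxI
      by_cases hyI : y ∈ I
      · have hy : ‖y‖ < R := by simpa [hI] using hyI
        rw [Set.indicator_of_notMem hxI, e3, XX_zero hP (hPO.trans hx), sub_zero, ← hg, ← neg_sub x y, inner_neg_left]
        have := small y x hy hx
        have h7 := neg_abs_le (inner ℝ (x-y) (XX P y))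
        have : -inner ℝ (x-y) (XX P y) * GG (4*t) (η^2) (x-y) ≤ |inner ℝ (x-y) (XX P y)| * GG (4*t) (η^2) (x-y) := by
          rw [← hg] at hG0
          gcongr; linarith
        linarith
      · have hy := out y hyA hyI
        rw [e3, XX_zero hP (hPO.trans hx), XX_zero hP (hPO.trans hy)]
        simp
        rw [Set.indicator_of_notMem hxI]; simp; positivity
  have final : ∫ p, -(k p.1 p.2 + k p.2 p.1) ∂(μ.prod μ) ≤ ∫ p, B p ∂(μ.prod μ) := by
    refine integral_mono (hki.add hki').neg ?_ point
    exact (b1.add (b2.add b3)).add (integrable_const _)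
  rw [integral_neg, integral_add hki hki', ← e1, ← e2, bI, hAr] at final
  have hu := h.mu_univ
  have hu0 : 0 ≤ μ.real Set.univ := measureReal_nonneg
  have hA0 : 0 ≤ μ.real (ball 0 (l^2*R)) - μ.real I := by rw [← hAr]; exact measureReal_nonneg
  have g1 : 2 * μ.real Set.univ * (μ.real (ball 0 (l^2*R)) - μ.real I) ≤ 2 * M * (μ.real (ball 0 (l^2*R)) - μ.real I) := by gcongr
  have g2 : 2/l^2 * μ.real Set.univ^2 ≤ 2/l^2*M^2 := by gcongr
  linarith

end Core


namespace Core
set_option linter.unusedSectionVars false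

lemma poh_b {a b M C1 C2 : ℝ} {t ω W0 : ℝ} {w W : E2 → ℝ}
    (h : Core a b M C1 C2 t ω W0 w W) {R l : ℝ} (hR : 0 < R) (hl : 2 ≤ l) (hP8 : l*R ≤ 8*t) :
    -(1/2) * ((mu t w).real (ball 0 R)^2 + 2 * M * ((mu t w).real (ball 0 (l^2*R)) - (mu t w).real (ball 0 R)) + 2/l^2*M^2)
     ≤ 2 * Real.pi * (∫ x, fderiv ℝ w x (XX (l*R) x) ∂(mu t w))
       + 24/64 * (2*Real.pi*C1*(196/6)*(196/27)^2) * (l*R) / t * M := by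
  have := h.fin
  have ht := h.tpos
  have hp := Real.pi_pos
  have hC1 := h.hC1
  have hM := h.hM
  have hb := h.hb
  set μ := mu t w
  set P := l*R with hPd
  have hP : 0 < P := by positivity
  set K := 24/64 * (2*Real.pi*C1*(196/6)*(196/27)^2) with hK
  have hK0 : 0 ≤ K := by positivity
  set J : ℝ → E2 → ℝ := fun η x => ∫ y, inner ℝ (y-x) (XX P x) * GG (4*t) (η^2) (y-x) ∂μ with hJ
  set Φ : E2 → ℝ := fun x => 2 * Real.pi * fderiv ℝ w x (XX P x) - ∫ y, 6/(4*t)^2 * qq (4*t) (y-x)^2 * fderiv ℝ w y (XX P x) with hΦ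
  have hlim : ∀ x, Tendsto (fun η => J η x) (nhdsWithin 0 (Set.Ioi 0)) (nhds (Φ x)) := by
    intro x
    by_cases hx : ‖x‖ ≤ 8*t
    · exact h.GGlim x hx _
    · have hX : XX P x = 0 := XX_zero hP (by push Not at hx; linarith)
      simp [hJ, hΦ, hX]
  have hbd : ∀ η > 0, ∀ x, ‖J η x‖ ≤ P * (M + 2*Real.pi*b) := by
    intro η hη x
    rw [Real.norm_eq_abs]
    refine (h.GGbd (by positivity) x _).trans ?_
    gcongr
    exact XX_norm_le' hP x
  have hmeas : ∀ η > 0, AEStronglyMeasurable (J η) μ := by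
    intro η hη
    have hε : 0 < η^2 := by positivity
    have hkc : Continuous (fun p : E2 × E2 => inner ℝ (p.2-p.1) (XX P p.1) * GG (4*t) (η^2) (p.2-p.1)) := by
      have h1 : Continuous fun p : E2 × E2 => GG (4*t) (η^2) (p.2-p.1) := (GG_cont _ hε).comp (by fun_prop)
      have h2 : Continuous fun p : E2 × E2 => XX P p.1 := (XX_cont P).comp (by fun_prop)
      exact (Continuous.inner (by fun_prop) h2).mul h1
    exact (hkc.stronglyMeasurable.integral_prod_right (ν := μ)).aestronglyMeasurable
  have hev : ∀ᶠ η : ℝ in nhdsWithin 0 (Set.Ioi 0), 0 < η := self_mem_nhdsWithin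
  have hΦb : ∀ x, ‖Φ x‖ ≤ P * (M + 2*Real.pi*b) := fun x =>
    le_of_tendsto (hlim x).norm (hev.mono fun η hη => hbd η hη x)
  have hconv : Tendsto (fun η => ∫ x, J η x ∂μ) (nhdsWithin 0 (Set.Ioi 0)) (nhds (∫ x, Φ x ∂μ)) := by
    refine tendsto_integral_filter_of_dominated_convergence (fun _ => P * (M + 2*Real.pi*b))
      (hev.mono fun η hη => hmeas η hη) (hev.mono fun η hη => Eventually.of_forall (hbd η hη))
      (integrable_const _) (Eventually.of_forall hlim)
  have hcw : Continuous fun y => fderiv ℝ w y (XX P y) :=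
    ((h.hw.continuous_fderiv (by norm_num))).clm_apply (XX_cont P)
  have i1 : Integrable (fun y => fderiv ℝ w y (XX P y)) μ := h.mu_int (hcw.integrable_of_hasCompactSupport
    (cs_of_zero (P := P) fun y hy => by rw [XX_zero hP hy]; simp))
  have hseq : Tendsto (fun n : ℕ => (1:ℝ)/((n:ℝ)+1)) atTop (nhdsWithin 0 (Set.Ioi 0)) :=
    tendsto_nhdsWithin_iff.2 ⟨tendsto_one_div_add_atTop_nhds_zero_nat, Eventually.of_forall fun n => by
      show (0:ℝ) < _; positivity⟩
  have hΦm : AEStronglyMeasurable Φ μ :=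
    aestronglyMeasurable_of_tendsto_ae (u := atTop) (f := fun n : ℕ => J ((1:ℝ)/((n:ℝ)+1)))
     (fun n => hmeas _ (by positivity)) (Eventually.of_forall fun x => (hlim x).comp hseq)
  have iΦ : Integrable Φ μ := Integrable.mono' (integrable_const _) hΦm (Eventually.of_forall hΦb)
  have h1 : -(1/2) * (μ.real (ball 0 R)^2 + 2 * M * (μ.real (ball 0 (l^2*R)) - μ.real (ball 0 R)) + 2/l^2*M^2) ≤ ∫ x, Φ x ∂μ :=
    ge_of_tendsto hconv (hev.mono fun η hη => h.sym hR hl hη)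
  refine h1.trans ?_
  have h2 : ∫ x, Φ x ∂μ ≤ ∫ x, (2 * Real.pi * fderiv ℝ w x (XX P x) + K * P / t) ∂μ := by
    refine integral_mono iΦ ((i1.const_mul _).add (integrable_const _)) fun x => ?_
    by_cases hx : ‖x‖ ≤ 8*t
    · have h3 := h.Lbd x hx (XX P x)
      rw [← hK] at h3
      have h4 := neg_abs_le (∫ y, 6/(4*t)^2 * qq (4*t) (y-x)^2 * fderiv ℝ w y (XX P x))
      have h5 : K * ‖XX P x‖ / t ≤ K * P / t := by
        gcongr
        exact XX_norm_le' hP x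
      simp only [hΦ]; linarith
    · have hX : XX P x = 0 := XX_zero hP (by push Not at hx; linarith)
      simp only [hΦ, hX]; simp; positivity
  refine h2.trans ?_
  rw [integral_add (i1.const_mul _) (integrable_const _), integral_const_mul]
  simp only [integral_const, smul_eq_mul]
  have h3 := h.mu_univ
  have h6 : 0 ≤ K * P / t := by positivity
  nlinarith [mul_le_mul_of_nonneg_right h3 h6]

lemma dvint {a b M C1 C2 : ℝ} {t ω W0 : ℝ} {w W : E2 → ℝ}
    (h : Core a b M C1 C2 t ω W0 w W) {R l : ℝ} (hR : 0 < R) (hl : 2 ≤ l) :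
    (2 - 8/l^2) * (mu t w).real (ball 0 R) - ((mu t w).real (ball 0 (l^2*R)) - (mu t w).real (ball 0 R))
      ≤ ∫ x, dv (l*R) x ∂(mu t w) := by
  have := h.fin
  set μ := mu t w
  have hP : 0 < l*R := by positivity
  have hl2 : 4 ≤ l^2 := by nlinarith
  have hPO : l*R ≤ l^2*R := by nlinarith
  have hRO : R ≤ l^2*R := by nlinarith
  set A : Set E2 := ball 0 (l^2*R) \ ball 0 R with hA
  set I : Set E2 := ball 0 R with hI
  have hAm : MeasurableSet A := measurableSet_ball.diff measurableSet_ball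
  have hIm : MeasurableSet I := measurableSet_ball
  have hAr : μ.real A = μ.real (ball 0 (l^2*R)) - μ.real I :=
    measureReal_sdiff (ball_subset_ball hRO) measurableSet_ball
  have iI : Integrable (I.indicator (1 : E2 → ℝ)) μ := (integrable_const (1:ℝ)).indicator hIm
  have iA : Integrable (A.indicator (1 : E2 → ℝ)) μ := (integrable_const (1:ℝ)).indicator hAm
  have i2 : Integrable (fun y => dv (l*R) y) μ := h.mu_int ((dv_cont _).integrable_of_hasCompactSupport
    (cs_of_zero (P := l*R) fun y hy => dv_zero hP hy))
  rw [← hAr, ← integral_indicator_one hIm, ← integral_indicator_one hAm, ← integral_const_mul, ← integral_sub (iI.const_mul _) iA]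
  refine integral_mono ((iI.const_mul _).sub iA) i2 fun y => ?_
  by_cases hy : y ∈ I
  · have hyA : y ∉ A := fun hh => hh.2 hy
    simp only [Set.indicator_of_mem hy, Set.indicator_of_notMem hyA]
    have := dv_ge_in hR (by linarith : 1 ≤ l) (y := y) (by simpa [hI] using hy)
    simp; linarith
  · by_cases hyA : y ∈ A
    · simp only [Set.indicator_of_mem hyA, Set.indicator_of_notMem hy]
      have := dv_ge hP y
      simp; linarith
    · have hy2 : l^2*R ≤ ‖y‖ := by
        by_contra hc
        push Not at hc
        exact hyA ⟨by simpa using hc, hy⟩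
      simp only [Set.indicator_of_notMem hyA, Set.indicator_of_notMem hy]
      rw [dv_zero hP (hPO.trans hy2)]; simp

end Core

/-- gradient bound constant -/
noncomputable def Gc (b M C1 : ℝ) : ℝ := 24/64 * (2*Real.pi*C1*(196/6)*(196/27)^2) + M + 2*Real.pi*b
noncomputable def Kc (C1 : ℝ) : ℝ := 24/64 * (2*Real.pi*C1*(196/6)*(196/27)^2)

lemma exists_kappa {c β : ℝ} (hc : 0 ≤ c) (hβ : 0 < β) : ∃ κ > 0, ∀ x, x ≤ κ → c * x ≤ β := by
  refine ⟨β/(c+1), by positivity, fun x hx => ?_⟩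
  calc c * x ≤ c * (β/(c+1)) := by gcongr
    _ = β * (c/(c+1)) := by ring
    _ ≤ β * 1 := by gcongr; rw [div_le_one (by positivity)]; linarith
    _ = β := mul_one _

lemma S5 {a b M C1 : ℝ} (C2 : ℝ) (ha : 0 < a) (hb : 0 < b) (hM : 0 < M) (hC1 : 0 < C1) :
    ∃ κ > 0, ∃ Rm ≥ (1:ℝ), ∀ t ω W0 w W, Core a b M C1 C2 t ω W0 w W → 1/κ < t → ω < κ →
      7.5 * Real.pi ≤ (mu t w).real (ball 0 Rm) := by
  have hp := Real.pi_pos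
  have hG0 : 0 ≤ Gc b M C1 := by unfold Gc; positivity
  have hK0 : 0 ≤ Kc C1 := by unfold Kc; positivity
  set G := Gc b M C1 with hG
  set K := Kc C1 with hK
  set m0 := Real.pi * (a/2 * Real.exp (-G)) with hm0
  have hm0p : 0 < m0 := by positivity
  set β := m0 * Real.pi / 4 with hβ
  have hβp : 0 < β := by positivity
  obtain ⟨k1, k1p, hk1⟩ := exists_kappa (c := 16*Real.pi*M+M^2) (β := β/4) (by positivity) (by positivity)
  set l := 2 + 1/k1 with hl
  have hl2 : 2 ≤ l := by rw [hl]; have : 0 < 1/k1 := by positivity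
                         linarith
  have hlk : 1/l^2 ≤ k1 := by
    rw [div_le_iff₀ (by positivity)]
    have : 1/k1 ≤ l^2 := by nlinarith
    calc (1:ℝ) = k1 * (1/k1) := by field_simp
      _ ≤ _ := by gcongr
  have E1 := hk1 _ hlk
  obtain ⟨k2, k2p, hk2⟩ := exists_kappa (c := (2*Real.pi+M)*M) (β := β/4) (by positivity) (by positivity)
  obtain ⟨N, hN⟩ := exists_nat_gt (1/k2)
  have hNp : (0:ℝ) < N := lt_trans (by positivity) hN
  have hNk : 1/(N:ℝ) ≤ k2 := by
    rw [div_le_iff₀ hNp]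
    calc (1:ℝ) = k2 * (1/k2) := by field_simp
      _ ≤ _ := by gcongr
  have E2' := hk2 _ hNk
  set Q := l * l^(2*N) with hQ
  have hQp : 0 < Q := by positivity
  obtain ⟨k3, k3p, hk3⟩ := exists_kappa (c := 2*Real.pi*(4+G*Q)*(Q^2*Real.pi)) (β := β/4) (by positivity) (by positivity)
  obtain ⟨k4, k4p, hk4⟩ := exists_kappa (c := K*Q*M) (β := β/5) (by positivity) (by positivity)
  refine ⟨min (min k3 k4) (min (a/2) (1/Q)), by positivity, l^(2*N), one_le_pow₀ (by linarith), ?_⟩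
  intro t ω W0 w W h htk hωk
  have ht := h.tpos
  have hω3 : ω ≤ k3 := hωk.le.trans ((min_le_left _ _).trans (min_le_left _ _))
  have hωa : ω ≤ a/2 := hωk.le.trans ((min_le_right _ _).trans (min_le_left _ _))
  have htk' : 1/t ≤ min (min k3 k4) (min (a/2) (1/Q)) := by
    have := one_div_le_one_div_of_le (by positivity) htk.le
    simpa using this
  have ht4 : 1/t ≤ k4 := htk'.trans ((min_le_left _ _).trans (min_le_right _ _))
  have htQ : Q ≤ t := by
    have : 1/t ≤ 1/Q := htk'.trans ((min_le_right _ _).trans (min_le_right _ _))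
    exact (one_div_le_one_div ht hQp).1 this
  have E3 := hk3 _ hω3
  have E4 := hk4 _ ht4
  have := h.fin
  set μ := mu t w with hμ
  set F : ℕ → ℝ := fun k => μ.real (ball 0 (l^(2*k))) with hF
  obtain ⟨k, hkN, hk⟩ : ∃ k ∈ Finset.range N, F (k+1) - F k ≤ M/N := by
    refine Finset.exists_le_of_sum_le (by simp; rintro rfl; simp at hNp) ?_
    rw [Finset.sum_range_sub]
    simp only [Finset.sum_const, Finset.card_range, nsmul_eq_mul]
    have e : (N:ℝ) * (M/N) = M := by field_simp
    rw [e]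
    have := h.mu_S (ball 0 (l^(2*N)))
    have h0 : 0 ≤ F 0 := measureReal_nonneg
    change μ.real (ball 0 (l^(2*N))) - F 0 ≤ M
    linarith
  have hkN : k < N := by simpa using hkN
  set R := l^(2*k) with hR
  have hl1 : 1 ≤ l := by linarith
  have hR1 : 1 ≤ R := one_le_pow₀ hl1
  have hRp : 0 < R := by linarith
  have hRN : R ≤ l^(2*N) := pow_le_pow_right₀ hl1 (by omega)
  have hlR : l^2*R = l^(2*(k+1)) := by rw [hR]; ring
  have hPQ : l*R ≤ Q := by rw [hQ]; gcongr
  have hP8 : l*R ≤ 8*t := by linarith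
  set m := μ.real (ball 0 R) with hm
  have hFk : μ.real (ball 0 (l^2*R)) - m ≤ M/N := by rw [hlR]; exact hk
  have hA0 : 0 ≤ μ.real (ball 0 (l^2*R)) - m := by
    have : m ≤ μ.real (ball 0 (l^2*R)) := measureReal_mono (ball_subset_ball (le_mul_of_one_le_left hRp.le (one_le_pow₀ hl1)))
    linarith
  have pa := h.poh_a (G := G) (by positivity) hP8 (fun x hx => h.S3' x hx)
  have pb := h.poh_b hRp hl2 hP8
  have pc := h.dvint hRp hl2
  have hmm : m0 ≤ m := (h.S4 hωa).trans (measureReal_mono (ball_subset_ball hR1))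
  have hmN : m ≤ μ.real (ball 0 (l^(2*N))) := measureReal_mono (ball_subset_ball hRN)
  refine le_trans ?_ hmN
  by_contra hcon
  push Not at hcon
  have hmM : m ≤ M := h.mu_S _
  rw [← hμ] at pa pb pc
  rw [← hm] at pb pc
  set α := μ.real (ball 0 (l^2*R)) - m with hα
  set D := ∫ x, fderiv ℝ w x (XX (l*R) x) ∂μ
  set D2 := ∫ x, dv (l*R) x ∂μ
  have q3 : 2*Real.pi*(ω * (4 + G*(l*R)) * ((l*R)^2*Real.pi)) ≤ β/4 := by
    refine le_trans ?_ E3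
    have hω := h.hω
    calc _ ≤ 2*Real.pi*(ω * (4 + G*Q) * (Q^2*Real.pi)) := by gcongr
      _ = _ := by ring
  have q4 : Kc C1 * (l*R) / t * M ≤ β/5 := by
    refine le_trans ?_ E4
    calc _ ≤ K * Q / t * M := by gcongr
      _ = _ := by ring
  have q2 : (2*Real.pi+M)*α ≤ β/4 := by
    refine le_trans ?_ E2'
    calc _ ≤ (2*Real.pi+M)*(M/N) := by gcongr
      _ = _ := by ring
  have q1 : 2*Real.pi*(8/l^2*m) + M^2/l^2 ≤ β/4 := by
    refine le_trans ?_ E1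
    calc _ ≤ 2*Real.pi*(8/l^2*M) + M^2/l^2 := by gcongr
      _ = _ := by ring
  have pb' : -(1/2) * (m^2 + 2 * M * α + 2/l^2*M^2) ≤ 2 * Real.pi * D + Kc C1 * (l*R) / t * M := pb
  have pab : 2*Real.pi*(D + D2) ≤ β/4 := (mul_le_mul_of_nonneg_left pa (by positivity)).trans q3
  have pcc := mul_le_mul_of_nonneg_left pc (by positivity : 0 ≤ 2*Real.pi)
  have e1 : 2/l^2*M^2 = 2*(M^2/l^2) := by ring
  rw [e1] at pb'
  have tot : 4*Real.pi*m - m^2/2 < β := by linarith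
  have : m0 * (Real.pi/4) ≤ m * (4*Real.pi - m/2) := by
    apply mul_le_mul hmm _ (by positivity) (by linarith)
    linarith
  have : m0 * (Real.pi/4) = β := by rw [hβ]; ring
  linarith


namespace Core
set_option linter.unusedSectionVars false

lemma near {a b M C1 C2 : ℝ} {t ω W0 : ℝ} {w W : E2 → ℝ}
    (h : Core a b M C1 C2 t ω W0 w W) {R : ℝ} (hR : 1 ≤ R) (hm : 7.5 * Real.pi ≤ (mu t w).real (ball 0 R)) {x : E2}
    (hx1 : 2*R ≤ ‖x‖) (hx2 : ‖x‖ ≤ 8*t) :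
    (mu t w).real (ball x (Real.exp (-(2*C2+5/2))/4 * ‖x‖)) ≤ Real.pi := by
  have := h.fin
  have ht := h.tpos
  have hl0 : Real.exp (-(2*C2+5/2)) ≤ 1 := Real.exp_le_one_iff.2 (by linarith [h.hC2])
  have hl1 : 0 < Real.exp (-(2*C2+5/2)) := Real.exp_pos _
  have s2 := fun z hz => h.S2 z hz
  set l := Real.exp (-(2*C2+5/2))
  set μ := mu t w
  have hxp : 0 < ‖x‖ := by linarith
  by_cases hc : (1 + l/4) * ‖x‖ ≤ 8*t
  · have hs : ball x (l/4*‖x‖) ⊆ ball 0 (8*t) \ ball 0 R := by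
      intro y hy
      have hy : ‖y - x‖ < l/4*‖x‖ := by simpa [dist_eq_norm] using hy
      have h1 := norm_sub_norm_le y x
      have h2 := norm_sub_norm_le x y
      rw [norm_sub_rev] at h2
      refine ⟨?_, ?_⟩
      · rw [mem_ball_zero_iff]; linarith
      · rw [mem_ball_zero_iff]; nlinarith
    refine (measureReal_mono hs).trans ?_
    rw [measureReal_sdiff (ball_subset_ball (by linarith)) measurableSet_ball]
    linarith [h.mu_8]
  · push Not at hc
    refine (measureReal_mono ?_).trans (s2 ((8*t/‖x‖) • x) ?_)
    · apply ball_subset_ball'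
      rw [dist_eq_norm]
      have e : x - (8*t/‖x‖) • x = (1 - 8*t/‖x‖) • x := by module
      rw [e, norm_smul, Real.norm_eq_abs, abs_of_nonpos (by rw [sub_nonpos, one_le_div hxp]; exact hx2)]
      have e2 : -(1 - 8*t/‖x‖) * ‖x‖ = 8*t - ‖x‖ := by field_simp; ring
      rw [e2]; nlinarith
    · rw [norm_smul, Real.norm_of_nonneg (by positivity)]; field_simp

lemma S6 {a b M C1 C2 : ℝ} {t ω W0 : ℝ} {w W : E2 → ℝ}
    (h : Core a b M C1 C2 t ω W0 w W) {R : ℝ} (hR : 1 ≤ R) (hm : 7.5 * Real.pi ≤ (mu t w).real (ball 0 R)) {x : E2}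
    (hx1 : 2*R ≤ ‖x‖) (hx2 : ‖x‖ ≤ 8*t) :
    2*Real.pi*(w x - w 0) ≤ 6/16 * (2*Real.pi*C1*(196/6)*(196/27)^2)
      + (Real.log (1+2/(Real.exp (-(2*C2+5/2))/4)) + 3/2) * M + (Real.log 2 + Real.log (1+R) + 3/2)*M + 2*Real.pi*b
      - 6.5 * Real.pi * Real.log ‖x‖ := by
  have := h.fin
  have ht := h.ht
  have htp := h.tpos
  have hM := h.hM
  have hl0 : Real.exp (-(2*C2+5/2)) ≤ 1 := Real.exp_le_one_iff.2 (by linarith [h.hC2])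
  have hl1 : 0 < Real.exp (-(2*C2+5/2)) := Real.exp_pos _
  have hne := h.near hR hm hx1 hx2
  set l := Real.exp (-(2*C2+5/2))/4 with hl
  have hlp : 0 < l := by positivity
  have hlh : l ≤ 1/4 := by rw [hl]; linarith
  set μ := mu t w with hμ
  have hxp : 0 < ‖x‖ := by linarith
  set Cl := Real.log (1+2/l) + 3/2 with hCl
  set CR := Real.log 2 + Real.log (1+R) + 3/2 with hCR
  have hlog2 : 0 ≤ Real.log 2 := Real.log_nonneg (by norm_num)
  have hClp : Real.log 2 + 3/2 ≤ Cl := by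
    rw [hCl]
    have : Real.log 2 ≤ Real.log (1+2/l) := Real.log_le_log (by norm_num) (by
      have : 2 ≤ 2/l := by rw [le_div_iff₀ hlp]; linarith
      linarith)
    linarith
  have hlx : 0 ≤ Real.log ‖x‖ := Real.log_nonneg (by linarith)
  have hlR : 0 ≤ Real.log (1+R) := Real.log_nonneg (by linarith)
  have hρ : 0 < 4*t := by linarith
  set I : Set E2 := ball 0 R with hI
  set A : Set E2 := ball x (l*‖x‖) with hA
  have point : ∀ y, y - x ≠ 0 → Real.posLog (4*t/‖y-x‖) - KK (4*t) 1 y ≤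
      Cl + (I.indicator 1 y * (CR - Real.log ‖x‖) + (A.indicator 1 y * Real.log ‖x‖ + inv1 (y-x))) := by
    intro y hy
    have hd : 0 < ‖y-x‖ := norm_pos_iff.2 hy
    have hK := KK_ge1 hρ y
    have hK0 := KK_nonneg hρ one_pos y
    have hny := norm_nonneg y
    rw [Real.log_div hρ.ne' (by positivity)] at hK
    have hi := inv1_nonneg (y-x)
    have h1 := norm_sub_norm_le y x
    have h2 := norm_sub_norm_le x y
    rw [norm_sub_rev] at h2
    by_cases hyI : y ∈ I
    · have hyR : ‖y‖ < R := by simpa [hI] using hyI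
      have hyA : y ∉ A := by
        intro hc
        have hc : ‖y - x‖ < l*‖x‖ := by simpa [hA, dist_eq_norm] using hc
        nlinarith
      rw [Set.indicator_of_mem hyI, Set.indicator_of_notMem hyA]
      have h3 : Real.posLog (4*t/‖y-x‖) ≤ Real.log (4*t) + Real.log 2 - Real.log ‖x‖ := by
        have h4 : 4*t/‖y-x‖ ≤ 4*t*2/‖x‖ := by
          rw [div_le_div_iff₀ hd hxp]; nlinarith
        refine (Real.posLog_le_posLog (by positivity) h4).trans ?_
        rw [Real.posLog_eq_log (by rw [abs_of_pos (by positivity), one_le_div hxp]; linarith), Real.log_div (by positivity) hxp.ne', Real.log_mul hρ.ne' (by norm_num)]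
      have h5 : Real.log (1+‖y‖) ≤ Real.log (1+R) := Real.log_le_log (by positivity) (by linarith)
      simp only [Pi.one_apply]
      linarith
    · rw [Set.indicator_of_notMem hyI]
      by_cases hyA : y ∈ A
      · have hc : ‖y - x‖ < l*‖x‖ := by simpa [hA, dist_eq_norm] using hyA
        rw [Set.indicator_of_mem hyA]
        have h3 := posLog_le h (ρ := 4*t) (y-x)
        rw [Real.posLog_eq_log (x := 4*t) (by rw [abs_of_pos hρ]; linarith)] at h3
        have h5 : Real.log (1+‖y‖) ≤ Real.log 2 + Real.log ‖x‖ := by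
          rw [← Real.log_mul (by norm_num) hxp.ne']
          exact Real.log_le_log (by positivity) (by nlinarith)
        simp only [Pi.one_apply]
        linarith
      · have hc : l*‖x‖ ≤ ‖y - x‖ := by
          by_contra hcon
          push Not at hcon
          exact hyA (by simpa [hA, dist_eq_norm] using hcon)
        rw [Set.indicator_of_notMem hyA]
        by_cases h6 : 4*t ≤ ‖y-x‖
        · have : Real.posLog (4*t/‖y-x‖) = 0 := by
            rw [Real.posLog_eq_zero_iff, abs_of_pos (by positivity), div_le_one hd]; exact h6
          rw [this]; linarith
        · push Not at h6
          rw [Real.posLog_eq_log (by rw [abs_of_pos (by positivity), one_le_div hd]; exact h6.le), Real.log_div hρ.ne' hd.ne']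
          have h5 : Real.log (1+‖y‖) ≤ Real.log (1+2/l) + Real.log ‖y-x‖ := by
            rw [← Real.log_mul (by positivity) hd.ne']
            refine Real.log_le_log (by positivity) ?_
            have : ‖x‖ ≤ ‖y-x‖/l := by rw [le_div_iff₀ hlp]; linarith
            have e : (1+2/l)*‖y-x‖ = ‖y-x‖ + 2*(‖y-x‖/l) := by ring
            rw [e]; linarith
          linarith
  have hIm : MeasurableSet I := measurableSet_ball
  have hAm : MeasurableSet A := measurableSet_ball
  have iI : Integrable (fun y => I.indicator (1 : E2 → ℝ) y * (CR - Real.log ‖x‖)) μ := ((integrable_const (1:ℝ)).indicator hIm).mul_const _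
  have iA : Integrable (fun y => A.indicator (1 : E2 → ℝ) y * Real.log ‖x‖) μ := ((integrable_const (1:ℝ)).indicator hAm).mul_const _
  have iv := h.inv1_mu x
  have i1 : Integrable (fun y => A.indicator (1 : E2 → ℝ) y * Real.log ‖x‖ + inv1 (y-x)) μ := iA.add iv
  have i2 : Integrable (fun y => I.indicator (1 : E2 → ℝ) y * (CR - Real.log ‖x‖) + (A.indicator (1 : E2 → ℝ) y * Real.log ‖x‖ + inv1 (y-x))) μ := iI.add i1
  have ik : Integrable (fun y => KK (4*t) 1 y) μ := by simpa using h.KK_int hρ one_pos 0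
  have key : ∫ y, (Real.posLog (4*t/‖y-x‖) - KK (4*t) 1 y) ∂μ ≤ ∫ y, (Cl + (I.indicator 1 y * (CR - Real.log ‖x‖) + (A.indicator 1 y * Real.log ‖x‖ + inv1 (y-x)))) ∂μ := by
    refine integral_mono_ae ((h.posLog_int _ x).sub ik) ((integrable_const _).add i2) ?_
    filter_upwards [h.ae_ne x] with y hy
    exact point y hy
  rw [integral_sub (h.posLog_int _ x) ik, integral_add (integrable_const _) i2, integral_add iI i1, integral_add iA iv,
    integral_mul_const, integral_mul_const, integral_indicator_one hIm, integral_indicator_one hAm] at key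
  simp only [integral_const, smul_eq_mul] at key
  have k1 := h.S1 x hx2
  have k2 := h.S1'
  have k3 := h.inv1_mu_le x
  have k4 : μ.real Set.univ * Cl ≤ Cl * M := by
    rw [mul_comm]; exact mul_le_mul_of_nonneg_left h.mu_univ (by linarith)
  have k5 : μ.real I * (CR - Real.log ‖x‖) ≤ CR * M - 7.5*Real.pi*Real.log ‖x‖ := by
    have q1 : μ.real I ≤ M := h.mu_S _
    have q2 : 0 ≤ CR := by linarith
    nlinarith [mul_le_mul_of_nonneg_left q1 q2, mul_le_mul_of_nonneg_right hm hlx]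
  have k6 : μ.real A * Real.log ‖x‖ ≤ Real.pi * Real.log ‖x‖ := mul_le_mul_of_nonneg_right hne hlx
  linarith

end Core

noncomputable def Sc (b M C1 C2 R : ℝ) : ℝ := (6/16 * (2*Real.pi*C1*(196/6)*(196/27)^2)
      + (Real.log (1+2/(Real.exp (-(2*C2+5/2))/4)) + 3/2) * M + (Real.log 2 + Real.log (1+R) + 3/2)*M + 2*Real.pi*b) / (2*Real.pi)

lemma Core.S6' {a b M C1 C2 : ℝ} {t ω W0 : ℝ} {w W : E2 → ℝ} (h : Core a b M C1 C2 t ω W0 w W) {R : ℝ} (hR : 1 ≤ R) (hm : 7.5 * Real.pi ≤ (mu t w).real (ball 0 R)) {x : E2}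
    (hx1 : 2*R ≤ ‖x‖) (hx2 : ‖x‖ ≤ 8*t) : w x - w 0 ≤ Sc b M C1 C2 R - 13/4 * Real.log ‖x‖ := by
  have h1 := h.S6 hR hm hx1 hx2
  have hp := Real.pi_pos
  unfold Sc
  rw [← mul_le_mul_iff_right₀ (by positivity : 0 < 2*Real.pi)]
  refine h1.trans (le_of_eq ?_)
  field_simp
  ring

theorem core_main {a b M C1 : ℝ} (C2 : ℝ) (ha : 0 < a) (hb : 0 < b) (hM : 0 < M) (hC1 : 0 < C1) :
    ∃ κ > 0, ∃ C' : ℝ, ∀ t ω W0 w W, Core a b M C1 C2 t ω W0 w W → 1/κ < t → ω < κ →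
      ∫ θ in ball (0:E2) (8*t), (1/(2*Real.pi)) * Real.log ‖θ‖ * (W θ * Real.exp (w θ - w 0)) ≤ C' := by
  obtain ⟨κ, hκ, R, hR, hS⟩ := S5 C2 ha hb hM hC1
  have hp := Real.pi_pos
  set S := Sc b M C1 C2 R
  have hlR : 0 ≤ Real.log (2*R) := Real.log_nonneg (by linarith)
  set c := 4 * b * Real.exp S * 8 with hc
  have hc0 : 0 ≤ c := by positivity
  have hfr : (Module.finrank ℝ E2 : ℝ) < 3 := by simp [E2]; norm_num
  have i3 : Integrable (fun y : E2 => (1+‖y‖)^(-(3:ℝ))) := integrable_one_add_norm hfr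
  set I3 := ∫ y : E2, (1+‖y‖)^(-(3:ℝ)) with hI3
  have hI30 : 0 ≤ I3 := integral_nonneg fun y => by positivity
  have hC0 : 0 ≤ 1/(2*Real.pi) * (Real.log (2*R) * M + c * I3) := by positivity
  refine ⟨κ, hκ, 1/(2*Real.pi) * (Real.log (2*R) * M + c * I3), ?_⟩
  intro t ω W0 w W h ht hω
  have hm := hS t ω W0 w W h ht hω
  have htp := h.tpos
  by_cases hint : IntegrableOn (fun θ => (1/(2*Real.pi)) * Real.log ‖θ‖ * (W θ * Real.exp (w θ - w 0))) (ball (0:E2) (8*t))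
  swap
  · rw [integral_undef hint]; exact hC0
  have iR : Integrable (fun θ => 1/(2*Real.pi) * (Real.log (2*R) * fd t w θ + c * (1+‖θ‖)^(-(3:ℝ)))) :=
    ((h.fd_int.const_mul _).add (i3.const_mul _)).const_mul _
  have hmono : ∫ θ in ball (0:E2) (8*t), (1/(2*Real.pi)) * Real.log ‖θ‖ * (W θ * Real.exp (w θ - w 0)) ≤
      ∫ θ in ball (0:E2) (8*t), 1/(2*Real.pi) * (Real.log (2*R) * fd t w θ + c * (1+‖θ‖)^(-(3:ℝ))) := by
    refine setIntegral_mono_on hint iR.integrableOn measurableSet_ball ?_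
    intro θ hθ
    have hθ8 : ‖θ‖ < 8*t := by simpa using hθ
    have hθ15 : θ ∈ ball (0:E2) (15*t) := ball_subset_ball (by linarith) hθ
    have hf : fd t w θ = W θ * Real.exp (w θ - w 0) := by
      unfold fd
      rw [Set.indicator_of_mem hθ15, ← h.pde θ hθ15]
    rw [mul_assoc, ← hf]
    refine mul_le_mul_of_nonneg_left ?_ (by positivity)
    have hf0 := h.fd_nonneg θ
    have hq0 : 0 ≤ c * (1+‖θ‖)^(-(3:ℝ)) := by positivity
    by_cases h2 : ‖θ‖ ≤ 2*R
    · have : Real.log ‖θ‖ ≤ Real.log (2*R) := by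
        rcases (norm_nonneg θ).eq_or_lt with h0 | h0
        · rw [← h0]; simpa using hlR
        · exact Real.log_le_log h0 h2
      nlinarith [mul_le_mul_of_nonneg_right this hf0]
    · push Not at h2
      have hr : 0 < ‖θ‖ := by linarith
      have hr1 : 1 ≤ ‖θ‖ := by linarith
      have h3 := h.S6' hR hm h2.le hθ8.le
      have h4 : fd t w θ ≤ b * (Real.exp S * ‖θ‖^(-(13/4):ℝ)) := by
        rw [hf]
        have h5 : Real.exp (w θ - w 0) ≤ Real.exp S * ‖θ‖^(-(13/4):ℝ) := by
          rw [Real.rpow_def_of_pos hr, ← Real.exp_add]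
          apply Real.exp_le_exp.2
          linarith
        exact mul_le_mul (h.Wb θ hθ15) h5 (Real.exp_pos _).le hb.le
      have h6 : Real.log ‖θ‖ ≤ ‖θ‖^((1/4):ℝ)/(1/4) := Real.log_le_rpow_div hr.le (by norm_num)
      have h7 : ‖θ‖^((1/4):ℝ) * ‖θ‖^(-(13/4):ℝ) = ‖θ‖^(-(3:ℝ)) := by
        rw [← Real.rpow_add hr]; norm_num
      have h8 : ‖θ‖^(-(3:ℝ)) ≤ 8 * (1+‖θ‖)^(-(3:ℝ)) := by
        have e : (2*‖θ‖)^(-(3:ℝ)) ≤ (1+‖θ‖)^(-(3:ℝ)) := Real.rpow_le_rpow_of_nonpos (by positivity) (by linarith) (by norm_num)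
        rw [Real.mul_rpow (by norm_num) hr.le] at e
        have e2 : (2:ℝ)^(-(3:ℝ)) = 1/8 := by
          rw [Real.rpow_neg (by norm_num)]; norm_num
        rw [e2] at e; linarith
      have h9 : 0 ≤ Real.log (2*R) * fd t w θ := mul_nonneg hlR hf0
      calc Real.log ‖θ‖ * fd t w θ ≤ (‖θ‖^((1/4):ℝ)/(1/4)) * (b * (Real.exp S * ‖θ‖^(-(13/4):ℝ))) := by
            gcongr
        _ = 4 * b * Real.exp S * (‖θ‖^((1/4):ℝ) * ‖θ‖^(-(13/4):ℝ)) := by ring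
        _ ≤ 4 * b * Real.exp S * (8 * (1+‖θ‖)^(-(3:ℝ))) := by rw [h7]; gcongr
        _ = c * (1+‖θ‖)^(-(3:ℝ)) := by rw [hc]; ring
        _ ≤ _ := by linarith
  refine hmono.trans ?_
  rw [integral_const_mul, integral_add (h.fd_int.const_mul _).integrableOn (i3.const_mul _).integrableOn, integral_const_mul, integral_const_mul]
  rw [← h.mu_real measurableSet_ball]
  gcongr
  · exact h.mu_S _
  · exact setIntegral_le_integral i3 (Eventually.of_forall fun y => by show (0:ℝ) ≤ _; positivity)


lemma min1 {u : E2 → ℝ} {x0 : E2} (hu : ContDiffAt ℝ 2 u x0) (j : Fin 2) {ε : ℝ}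
    (hm : IsLocalMin (fun x => u x + ε*(1-‖x‖^2)) x0) : 2*ε ≤ pd j (pd j u) x0 := by
  set e : E2 := EuclideanSpace.single j 1 with he
  have hee : inner ℝ e e = (1:ℝ) := by
    rw [real_inner_self_eq_norm_sq, he]; simp
  set p : ℝ → E2 := fun s => x0 + s • e with hpdef
  have hp : ∀ s, HasDerivAt p e s := fun s => by
    have := ((hasDerivAt_id s).smul_const e).const_add x0
    rw [one_smul] at this
    exact this
  have hp0 : p 0 = x0 := by simp [hpdef]
  have hpt : Tendsto p (nhds 0) (nhds x0) := by
    have := (hp 0).continuousAt.tendsto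
    rwa [hp0] at this
  set g : ℝ → ℝ := fun s => u (p s) + ε*(1-‖p s‖^2) with hg
  have hgm : IsLocalMin g 0 := by
    have := hpt.eventually hm
    show ∀ᶠ s in nhds 0, g 0 ≤ g s
    simp only [hg, hp0]
    exact this
  have hev : ∀ᶠ x in nhds x0, ContDiffAt ℝ 2 u x := hu.eventually (by simp)
  have hd : ∀ᶠ s in nhds (0:ℝ), HasDerivAt g (pd j u (p s) + ε*(-(2*inner ℝ (p s) e))) s := by
    filter_upwards [hpt.eventually hev] with s hs
    have h1 : HasDerivAt (fun s => u (p s)) (pd j u (p s)) s :=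
      (hs.differentiableAt (by norm_num)).hasFDerivAt.comp_hasDerivAt s (hp s)
    have h2 : HasDerivAt (fun s => ‖p s‖^2) (2*inner ℝ (p s) e) s := (hp s).norm_sq
    exact h1.add ((h2.const_sub 1).const_mul ε)
  have hdd : deriv (deriv g) 0 = pd j (pd j u) x0 - 2*ε := by
    have e1 : deriv g =ᶠ[nhds 0] fun s => pd j u (p s) + ε*(-(2*inner ℝ (p s) e)) := hd.mono fun s hs => hs.deriv
    rw [e1.deriv_eq]
    have h1 : DifferentiableAt ℝ (pd j u) (p 0) := by
      rw [hp0]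
      have : ContDiffAt ℝ 1 (fderiv ℝ u) x0 := hu.fderiv_right (by norm_num)
      exact (this.differentiableAt (by norm_num)).clm_apply (differentiableAt_const _)
    have h2 : HasDerivAt (fun s => pd j u (p s)) (fderiv ℝ (pd j u) (p 0) e) 0 := h1.hasFDerivAt.comp_hasDerivAt 0 (hp 0)
    have h3 : HasDerivAt (fun s => inner ℝ (p s) e) (inner ℝ e e) 0 := by
      simpa using (hp 0).inner ℝ (hasDerivAt_const 0 e)
    have h4 := h2.add ((h3.const_mul 2).neg.const_mul ε)
    refine h4.deriv.trans ?_
    rw [hee, hp0]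
    simp only [pd]; ring
  by_contra hc
  push Not at hc
  have hneg : deriv (deriv g) 0 < 0 := by rw [hdd]; linarith
  have hmax := isLocalMax_of_deriv_deriv_neg hneg hgm.deriv_eq_zero hd.self_of_nhds.continuousAt
  have hconst : g =ᶠ[nhds 0] fun _ => g 0 := by
    filter_upwards [hgm, hmax] with s h1 h2
    exact le_antisymm h2 h1
  have := hconst.deriv.deriv_eq
  simp at this
  linarith

lemma minprin {u : E2 → ℝ} (hu : ContDiffOn ℝ 2 u (closedBall (0:E2) 1))
    (hl : ∀ x ∈ ball (0:E2) 1, lapl u x ≤ 0) (hb : ∀ x ∈ sphere (0:E2) 1, u x = 0) :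
    ∀ x ∈ ball (0:E2) 1, 0 ≤ u x := by
  have key : ∀ ε > 0, ∀ x ∈ closedBall (0:E2) 1, 0 ≤ u x + ε*(1-‖x‖^2) := by
    intro ε hε x hx
    obtain ⟨x0, hx0, hmin⟩ := (isCompact_closedBall (0:E2) 1).exists_isMinOn ⟨0, by simp⟩
      (f := fun x => u x + ε*(1-‖x‖^2)) (hu.continuousOn.add (by fun_prop))
    have h1 := hmin hx
    refine le_trans ?_ h1
    have hn : ‖x0‖ ≤ 1 := by simpa using hx0
    rcases hn.eq_or_lt with h2 | h2
    · dsimp only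
      rw [hb x0 (by simpa using h2), h2]; simp
    · exfalso
      have hxb : x0 ∈ ball (0:E2) 1 := by simpa using h2
      have hnb : closedBall (0:E2) 1 ∈ nhds x0 := mem_of_superset (isOpen_ball.mem_nhds hxb) ball_subset_closedBall
      have hc := hu.contDiffAt hnb
      have hloc : IsLocalMin (fun x => u x + ε*(1-‖x‖^2)) x0 := hmin.isLocalMin hnb
      have a0 := min1 hc 0 hloc
      have a1 := min1 hc 1 hloc
      have := hl x0 hxb
      unfold lapl at this
      linarith
  intro x hx
  have hx1 : ‖x‖ < 1 := by simpa using hx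
  by_contra hc
  push Not at hc
  have := key (-u x/2) (by linarith) x (ball_subset_closedBall hx)
  nlinarith [sq_nonneg ‖x‖]

lemma lapl_resc (u : E2 → ℝ) (x : E2) (r : ℝ) (θ : E2) :
    lapl (fun θ => u (x + r • θ)) θ = r^2 * lapl u (x + r • θ) := by
  have h1 : ∀ (g : E2 → ℝ) (j : Fin 2), pd j (fun θ => g (x + r • θ)) = fun θ => r * pd j g (x + r • θ) := by
    intro g j
    ext θ
    unfold pd
    have := fderiv_comp_smul (𝕜 := ℝ) (f := fun z => g (x + z)) (x := θ) r
    rw [this, fderiv_comp_add_left]; simp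
  have h2 : ∀ j, pd j (pd j (fun θ => u (x + r • θ))) θ = r^2 * pd j (pd j u) (x + r • θ) := by
    intro j
    rw [h1]
    have : pd j (fun θ => r * pd j u (x + r • θ)) θ = r * pd j (fun θ => pd j u (x + r • θ)) θ := by
      have e := fderiv_const_smul_field (𝕜 := ℝ) (f := fun θ => pd j u (x + r • θ)) r
      have e' := congrFun e θ
      show fderiv ℝ (r • fun θ => pd j u (x + r • θ)) θ _ = _
      rw [e']; rfl
    rw [this, h1]; ring
  unfold lapl
  rw [h2, h2]; ring

lemma lapl_congr {f g : E2 → ℝ} {y : E2} (h : f =ᶠ[nhds y] g) : lapl f y = lapl g y := by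
  have h1 : ∀ {f g : E2 → ℝ} (j : Fin 2), f =ᶠ[nhds y] g → pd j f =ᶠ[nhds y] pd j g := by
    intro f g j h
    filter_upwards [h.fderiv (𝕜 := ℝ)] with z hz
    unfold pd; rw [hz]
  unfold lapl
  rw [(h1 0 (h1 0 h)).self_of_nhds, (h1 1 (h1 1 h)).self_of_nhds]

lemma chvar (F : E2 → ℝ) (x : E2) {r ρ : ℝ} (hr : 0 < r) :
    ∫ θ in ball (0:E2) ρ, r^2 * F (x + r • θ) = ∫ y in ball x (r*ρ), F y := by
  rw [integral_const_mul, ← integral_indicator measurableSet_ball, ← integral_indicator measurableSet_ball]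
  have e : ∀ θ, (ball (0:E2) ρ).indicator (fun θ => F (x + r • θ)) θ = (fun z => (ball x (r*ρ)).indicator F (x + z)) (r • θ) := by
    intro θ
    have : θ ∈ ball (0:E2) ρ ↔ x + r • θ ∈ ball x (r*ρ) := by
      rw [mem_ball_zero_iff, mem_ball, dist_eq_norm, add_sub_cancel_left, norm_smul, Real.norm_of_nonneg hr.le]
      constructor
      · intro h; gcongr
      · intro h; exact lt_of_mul_lt_mul_left h hr.le
    by_cases hθ : θ ∈ ball (0:E2) ρ
    · simp only [Set.indicator_of_mem hθ, Set.indicator_of_mem (this.1 hθ)]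
    · simp only [Set.indicator_of_notMem hθ, Set.indicator_of_notMem (fun hh => hθ (this.2 hh))]
  simp_rw [e]
  have e3 := Measure.integral_comp_smul (volume : Measure E2) (fun z => (ball x (r*ρ)).indicator F (x + z)) r
  rw [e3, integral_add_left_eq_self (μ := volume) (fun z => (ball x (r*ρ)).indicator F z) x]
  simp [abs_of_pos hr]
  field_simp

lemma mkCore {a b M C1 C2 ω δ r : ℝ} {u V : E2 → ℝ} {x : E2}
    (ha : 0 < a) (hb : 0 < b) (hM : 0 < M) (hC1 : 0 < C1) (hC2 : 0 < C2) (hω : 0 ≤ ω) (hr : 0 < r)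
    (ht : 1 ≤ δ/(16*r)) (hu : ContDiffOn ℝ 2 u (ball x δ)) (hr2 : r^2 = Real.exp (-u x))
    (hpos : ∀ y ∈ ball x δ, 0 ≤ u y) (hmax : ∀ y ∈ ball x δ, u y ≤ u x)
    (hpde : ∀ y ∈ ball x δ, -lapl u y = V y * Real.exp (u y))
    (hV0 : ∀ y ∈ ball x δ, 0 ≤ V y) (hVb : ∀ y ∈ ball x δ, V y ≤ b) (hVω : ∀ y ∈ ball x δ, |V y - V x| ≤ ω)
    (hVa : a ≤ V x) (hm1 : ∫ y in ball x (15*δ/16), V y * Real.exp (u y) ≤ M)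
    (hm2 : ∫ y in ball x (δ/2), V y * Real.exp (u y) ≤ 8 * Real.pi + Real.pi/2)
    (hc1 : ∀ y : E2, ‖y‖ = 1/16 → u (x + δ • y) ≤ C1) (hc2 : ∀ y : E2, ‖y‖ = 1/2 → u (x + δ • y) ≤ C2) :
    ∃ w, Core a b M C1 C2 (δ/(16*r)) ω (V x) w (fun θ => V (x + r • θ)) ∧
      ∀ θ ∈ ball (0:E2) (15*(δ/(16*r))), w θ = u (x + r • θ) := by
  set t := δ/(16*r) with htd
  have htp : 0 < t := by linarith
  have hδt : δ = 16*r*t := by rw [htd]; field_simp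
  have hδ : 0 < δ := by rw [hδt]; positivity
  let χ : ContDiffBump (0:E2) := ⟨15*t, 31/2*t, by linarith, by linarith⟩
  set U : E2 → ℝ := fun θ => u (x + r • θ) with hU
  have hmem : ∀ θ : E2, ‖θ‖ < 16*t → x + r • θ ∈ ball x δ := by
    intro θ hθ
    rw [mem_ball, dist_eq_norm, add_sub_cancel_left, norm_smul, Real.norm_of_nonneg hr.le, hδt]
    nlinarith
  have hU2 : ∀ θ : E2, ‖θ‖ < 16*t → ContDiffAt ℝ 2 U θ := by
    intro θ hθ
    have h1 := hu.contDiffAt (isOpen_ball.mem_nhds (hmem θ hθ))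
    exact h1.comp θ (by fun_prop)
  set w : E2 → ℝ := fun θ => χ θ * U θ with hw
  have hw2 : ContDiff ℝ 2 w := by
    rw [contDiff_iff_contDiffAt]
    intro θ
    by_cases hθ : ‖θ‖ < 16*t
    · exact χ.contDiffAt.mul (hU2 θ hθ)
    · have : w =ᶠ[nhds θ] fun _ => 0 := by
        have h1 : θ ∈ (closedBall (0:E2) (31/2*t))ᶜ := by
          simp; push Not at hθ; linarith
        filter_upwards [isClosed_closedBall.isOpen_compl.mem_nhds h1] with z hz
        have hz : 31/2*t < ‖z‖ := by simpa using hz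
        have : χ z = 0 := χ.zero_of_le_dist (by simpa using hz.le)
        simp [hw, this]
      exact contDiffAt_const.congr_of_eventuallyEq this
  have hwc : HasCompactSupport w := χ.hasCompactSupport.mul_right
  have hwU : ∀ θ ∈ ball (0:E2) (15*t), w θ = U θ := by
    intro θ hθ
    have : χ θ = 1 := χ.one_of_mem_closedBall (ball_subset_closedBall hθ)
    simp [hw, this]
  have hw0 : w 0 = u x := by rw [hwU 0 (by simp; linarith)]; simp [hU]
  have hlap : ∀ θ ∈ ball (0:E2) (15*t), -lapl w θ = r^2 * (V (x + r • θ) * Real.exp (u (x + r • θ))) := by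
    intro θ hθ
    have : w =ᶠ[nhds θ] U := by
      filter_upwards [isOpen_ball.mem_nhds hθ] with z hz using hwU z hz
    have hθ' : ‖θ‖ < 15*t := by simpa using hθ
    rw [lapl_congr this, lapl_resc, ← hpde _ (hmem θ (by linarith))]; ring
  have hmem' : ∀ θ ∈ ball (0:E2) (15*t), x + r • θ ∈ ball x δ := by
    intro θ hθ
    have hθ' : ‖θ‖ < 15*t := by simpa using hθ
    exact hmem θ (by linarith)
  have hmass : ∀ ρ ≤ 15*t, ∫ y in ball (0:E2) ρ, -lapl w y = ∫ y in ball x (r*ρ), V y * Real.exp (u y) := by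
    intro ρ hρ
    rw [← chvar _ x hr]
    exact setIntegral_congr_fun measurableSet_ball fun y hy => hlap y (ball_subset_ball hρ hy)
  have hsp : ∀ (ρ C : ℝ), 0 < ρ → ρ < 15 → (∀ y : E2, ‖y‖ = ρ/16 → u (x + δ • y) ≤ C) → ∀ y : E2, ‖y‖ = ρ*t → w y ≤ C := by
    intro ρ C h0 h1 h2 y hy
    rw [hwU y (by simp [hy]; nlinarith)]
    have h3 := h2 ((r/δ) • y) (by
      rw [norm_smul, Real.norm_of_nonneg (by positivity), hy, hδt]; field_simp)
    rw [smul_smul] at h3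
    have : δ * (r/δ) = r := by field_simp
    rwa [this] at h3
  have hxm : x ∈ ball x δ := by simpa using hδ
  refine ⟨w, ⟨ht, ha, hb, hM, hC1, hC2, hω, hw2, hwc, ?_, ?_, ?_, ?_, ?_, ?_, hVa, hVb x hxm, ?_, ?_, ?_, ?_⟩, hwU⟩
  · intro y hy; rw [hwU y hy]; exact hpos _ (hmem' y hy)
  · intro y hy; rw [hwU y hy, hw0]; exact hmax _ (hmem' y hy)
  · intro y hy
    rw [hlap y hy, hwU y hy, hw0, hr2, sub_eq_add_neg, Real.exp_add]; ring
  · intro y hy; exact hV0 _ (hmem' y hy)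
  · intro y hy; exact hVb _ (hmem' y hy)
  · intro y hy; exact hVω _ (hmem' y hy)
  · rw [hmass _ le_rfl]
    have : r*(15*t) = 15*δ/16 := by rw [hδt]; ring
    rwa [this]
  · rw [hmass _ (by linarith)]
    have : r*(8*t) = δ/2 := by rw [hδt]; ring
    rwa [this]
  · intro y hy; exact hsp 1 C1 (by norm_num) (by norm_num) hc1 y (by simpa using hy)
  · intro y hy; exact hsp 8 C2 (by norm_num) (by norm_num) (fun z hz => hc2 z (by rw [hz]; norm_num)) y hy

lemma infDist_facts {x : E2} (hx : x ∈ ball (0:E2) 1) :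
    0 < infDist x (sphere (0:E2) 1) ∧ ball x (infDist x (sphere (0:E2) 1)) ⊆ ball 0 1 := by
  have hx1 : ‖x‖ < 1 := by simpa using hx
  have hne : (sphere (0:E2) 1).Nonempty := ⟨EuclideanSpace.single 0 1, by simp⟩
  refine ⟨(isClosed_sphere.notMem_iff_infDist_pos hne).1 (by simp; linarith), ?_⟩
  have hd : infDist x (sphere (0:E2) 1) ≤ 1 - ‖x‖ := by
    rcases eq_or_ne x 0 with rfl | h0
    · have h1 : (EuclideanSpace.single 0 1 : E2) ∈ sphere (0:E2) 1 := by simp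
      refine (infDist_le_dist_of_mem h1).trans ?_
      simp
    · have hxp : 0 < ‖x‖ := norm_pos_iff.2 h0
      have h1 : (‖x‖⁻¹ • x : E2) ∈ sphere (0:E2) 1 := by
        rw [mem_sphere_zero_iff_norm, norm_smul, norm_inv, norm_norm]; field_simp
      refine (infDist_le_dist_of_mem h1).trans ?_
      have e : x - ‖x‖⁻¹ • x = (1 - ‖x‖⁻¹) • x := by module
      rw [dist_eq_norm, e, norm_smul, Real.norm_eq_abs, abs_of_nonpos (by
        rw [sub_nonpos]; exact (one_le_inv₀ hxp).2 hx1.le)]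
      apply le_of_eq; field_simp; ring
  refine (ball_subset_ball hd).trans (ball_subset_ball' ?_)
  rw [dist_zero_right]; linarith

theorem stmt9
    (b A s C₀ : ℝ) (hs1 : 1/2 < s) (hs2 : s ≤ 1)
    (V u : ℕ → E2 → ℝ) (x_ : ℕ → E2) (δ r : ℕ → ℝ) (v : ℕ → E2 → ℝ)
    (hu : ∀ i, ContDiffOn ℝ 2 (u i) (closedBall (0:E2) 1))
    (hVb : ∀ i, ∀ x ∈ ball (0:E2) 1, 0 ≤ V i x ∧ V i x ≤ b)
    (hVhol : ∀ i, ∀ x ∈ ball (0:E2) 1, ∀ y ∈ ball (0:E2) 1, |V i x - V i y| ≤ A * ‖x - y‖ ^ s)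
    (hpde : ∀ i, ∀ x ∈ ball (0:E2) 1, -(lapl (u i) x) = V i x * Real.exp (u i x))
    (hbc : ∀ i, ∀ x ∈ sphere (0:E2) 1, u i x = 0)
    (hint : ∀ i, (∫ y in ball (0:E2) 1, Real.exp (u i y)) ≤ C₀)
    (hxmem : ∀ i, x_ i ∈ ball (0:E2) 1)
    (hmax : ∀ i, ∀ y ∈ closedBall (0:E2) 1, u i y ≤ u i (x_ i))
    (hblow : Tendsto (fun i => u i (x_ i)) atTop atTop)
    (hδ : ∀ i, δ i = Metric.infDist (x_ i) (sphere (0:E2) 1))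
    (hδ0 : Tendsto δ atTop (nhds 0))
    (hr : ∀ i, r i = Real.exp (-(u i (x_ i)) / 2))
    (hrδ : Tendsto (fun i => r i / δ i) atTop (nhds 0))
    (hmass : Tendsto (fun i => ∫ y in ball (x_ i) (δ i / 2), V i y * Real.exp (u i y)) atTop
      (nhds (8 * Real.pi)))
    (hbound : ∀ ε : ℝ, 0 < ε → ε < 1 → ∃ Cε : ℝ, ∀ i, ∀ y : E2, ‖y‖ = ε →
      u i (x_ i + δ i • y) ≤ Cε)
    (hv : ∀ i θ, v i θ = u i (x_ i + r i • θ) - u i (x_ i)) :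
    ∃ C' : ℝ, ∀ i, (∫ θ in ball (0:E2) (δ i / (2 * r i)),
      (1 / (2 * Real.pi)) * Real.log ‖θ‖ * (V i (x_ i + r i • θ) * Real.exp (v i θ))) ≤ C' := by
  have hp := Real.pi_pos
  have hfac := fun i => infDist_facts (hxmem i)
  have hδpos : ∀ i, 0 < δ i := fun i => by rw [hδ]; exact (hfac i).1
  have hsub : ∀ i, ball (x_ i) (δ i) ⊆ ball 0 1 := fun i => by rw [hδ]; exact (hfac i).2
  have hrpos : ∀ i, 0 < r i := fun i => by rw [hr]; exact Real.exp_pos _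
  have hupos : ∀ i, ∀ x ∈ ball (0:E2) 1, 0 ≤ u i x := fun i => minprin (hu i) (fun x hx => by
    have h1 := hpde i x hx
    have h2 := mul_nonneg (hVb i x hx).1 (Real.exp_pos (u i x)).le
    linarith) (hbc i)
  obtain ⟨c1, hc1⟩ := hbound (1/16) (by norm_num) (by norm_num)
  obtain ⟨c2, hc2⟩ := hbound (1/2) (by norm_num) (by norm_num)
  set b' := |b| + 1 with hb'
  have hbb : b ≤ b' := by linarith [le_abs_self b]
  have hb'p : 0 < b' := by positivity
  set D := |C₀| + 1 with hD
  have hDp : 0 < D := by positivity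
  have hCD : C₀ ≤ D := by linarith [le_abs_self C₀]
  set a := 2 * Real.pi / D with ha
  have hap : 0 < a := by positivity
  obtain ⟨κ, hκ, C', hmain⟩ := core_main (a := a) (b := b') (M := b' * D) (C1 := |c1|+1) (|c2|+1) hap hb'p
    (by positivity) (by positivity)
  set ω : ℕ → ℝ := fun i => |A| * δ i ^ s with hω
  have hω0 : Tendsto ω atTop (nhds 0) := by
    have h1 : Tendsto (fun i => δ i ^ s) atTop (nhds ((0:ℝ)^s)) := hδ0.rpow_const (Or.inr (by linarith))
    rw [Real.zero_rpow (by linarith)] at h1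
    simpa using h1.const_mul |A|
  have hexpint : ∀ i, IntegrableOn (fun y => Real.exp (u i y)) (ball (0:E2) 1) := fun i =>
    (((hu i).continuousOn.rexp).integrableOn_compact (isCompact_closedBall _ _)).mono_set ball_subset_closedBall
  have hexple : ∀ i ρ, ρ ≤ δ i → ∫ y in ball (x_ i) ρ, Real.exp (u i y) ≤ D := by
    intro i ρ hρ
    refine le_trans ?_ ((hint i).trans hCD)
    exact setIntegral_mono_set (hexpint i) (Eventually.of_forall fun y => (Real.exp_pos _).le)
      (HasSubset.Subset.eventuallyLE ((ball_subset_ball hρ).trans (hsub i)))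
  have hVle : ∀ i ρ B, ρ ≤ δ i → 0 ≤ B → (∀ y ∈ ball (x_ i) ρ, V i y ≤ B) →
      ∫ y in ball (x_ i) ρ, V i y * Real.exp (u i y) ≤ B * D := by
    intro i ρ B hρ hB hVB
    have hss := (ball_subset_ball hρ).trans (hsub i)
    calc _ ≤ ∫ y in ball (x_ i) ρ, B * Real.exp (u i y) := by
          refine integral_mono_of_nonneg ?_ (((hexpint i).mono_set hss).const_mul _) ?_
          · filter_upwards [ae_restrict_mem measurableSet_ball] with y hy
            exact mul_nonneg (hVb i y (hss hy)).1 (Real.exp_pos _).le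
          · filter_upwards [ae_restrict_mem measurableSet_ball] with y hy
            exact mul_le_mul_of_nonneg_right (hVB y hy) (Real.exp_pos _).le
      _ = B * ∫ y in ball (x_ i) ρ, Real.exp (u i y) := integral_const_mul _ _
      _ ≤ B * D := mul_le_mul_of_nonneg_left (hexple i ρ hρ) hB
  have hVω : ∀ i, ∀ y ∈ ball (x_ i) (δ i), |V i y - V i (x_ i)| ≤ ω i := by
    intro i y hy
    refine (hVhol i y (hsub i hy) (x_ i) (hxmem i)).trans ?_
    have h1 : ‖y - x_ i‖ ≤ δ i := by rw [← dist_eq_norm]; exact (mem_ball.1 hy).le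
    have h2 : ‖y - x_ i‖ ^ s ≤ δ i ^ s := Real.rpow_le_rpow (norm_nonneg _) h1 (by linarith)
    have h3 : 0 ≤ ‖y - x_ i‖ ^ s := Real.rpow_nonneg (norm_nonneg _) _
    exact mul_le_mul (le_abs_self A) h2 h3 (abs_nonneg A)
  have hωnn : ∀ i, 0 ≤ ω i := fun i => mul_nonneg (abs_nonneg _) (Real.rpow_nonneg (hδpos i).le _)
  have htop : Tendsto (fun i => δ i / (16 * r i)) atTop atTop := by
    have h1 : Tendsto (fun i => r i / δ i) atTop (nhdsWithin 0 (Set.Ioi 0)) :=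
      tendsto_nhdsWithin_iff.2 ⟨hrδ, Eventually.of_forall fun i => div_pos (hrpos i) (hδpos i)⟩
    have h2 := (tendsto_inv_nhdsGT_zero.comp h1).const_mul_atTop (by norm_num : (0:ℝ) < 1/16)
    refine h2.congr fun i => ?_
    have := (hrpos i).ne'
    have := (hδpos i).ne'
    simp only [Function.comp]; field_simp
  have hev : ∀ᶠ i in atTop, (∫ θ in ball (0:E2) (δ i / (2 * r i)),
      (1 / (2 * Real.pi)) * Real.log ‖θ‖ * (V i (x_ i + r i • θ) * Real.exp (v i θ))) ≤ C' := by
    filter_upwards [hmass.eventually_lt_const (show 8*Real.pi < 8*Real.pi + Real.pi/2 by linarith),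
      hmass.eventually_const_lt (show 4*Real.pi < 8*Real.pi by linarith),
      hω0.eventually_lt_const hap, hω0.eventually_lt_const hκ,
      htop.eventually_ge_atTop 1, htop.eventually_gt_atTop (1/κ)] with i m1 m2 o1 o2 t1 t2
    have hVa : a ≤ V i (x_ i) := by
      have h1 := hVle i (δ i/2) (V i (x_ i) + ω i) (by linarith [hδpos i])
        (add_nonneg (hVb i _ (hxmem i)).1 (hωnn i)) (fun y hy => by
          have := hVω i y (ball_subset_ball (by linarith [hδpos i]) hy)
          linarith [le_abs_self (V i y - V i (x_ i))])
      have h2 : 4*Real.pi/D ≤ V i (x_ i) + ω i := by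
        rw [div_le_iff₀ hDp]; linarith
      have h3 : 4*Real.pi/D = 2*a := by rw [ha]; ring
      linarith
    have hr2 : r i ^ 2 = Real.exp (-u i (x_ i)) := by
      rw [hr, ← Real.exp_nat_mul]; congr 1; push_cast; ring
    obtain ⟨w, hcore, hwU⟩ := mkCore (a := a) (b := b') (M := b' * D) (C1 := |c1|+1) (C2 := |c2|+1) (ω := ω i)
      (δ := δ i) (r := r i) (u := u i) (V := V i) (x := x_ i) hap hb'p (by positivity) (by positivity) (by positivity)
      (hωnn i) (hrpos i) t1 ((hu i).mono ((hsub i).trans ball_subset_closedBall)) hr2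
      (fun y hy => hupos i y (hsub i hy)) (fun y hy => hmax i y (ball_subset_closedBall (hsub i hy)))
      (fun y hy => hpde i y (hsub i hy)) (fun y hy => (hVb i y (hsub i hy)).1)
      (fun y hy => (hVb i y (hsub i hy)).2.trans hbb) (hVω i) hVa
      (hVle i _ b' (by linarith [hδpos i]) hb'p.le (fun y hy =>
        (hVb i y (hsub i (ball_subset_ball (by linarith [hδpos i]) hy))).2.trans hbb))
      m1.le (fun y hy => (hc1 i y hy).trans (by linarith [le_abs_self c1]))
      (fun y hy => (hc2 i y hy).trans (by linarith [le_abs_self c2]))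
    have hfin := hmain _ _ _ _ _ hcore t2 o2
    have e8 : 8 * (δ i / (16 * r i)) = δ i / (2 * r i) := by
      have := hrpos i
      rw [← mul_div_assoc, div_eq_div_iff (by positivity) (by positivity)]; ring
    rw [e8] at hfin
    refine le_trans (le_of_eq ?_) hfin
    have hsm : δ i / (2 * r i) ≤ 15 * (δ i / (16 * r i)) := by rw [← e8]; linarith
    have hw0 : w 0 = u i (x_ i) := by
      rw [hwU 0 (by simp only [mem_ball, dist_self]; linarith)]; simp
    refine setIntegral_congr_fun measurableSet_ball fun θ hθ => ?_
    rw [hv, hwU θ (ball_subset_ball hsm hθ), hw0]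
  obtain ⟨C, hC⟩ := Filter.IsBoundedUnder.bddAbove_range (f := fun i => ∫ θ in ball (0:E2) (δ i / (2 * r i)),
      (1 / (2 * Real.pi)) * Real.log ‖θ‖ * (V i (x_ i + r i • θ) * Real.exp (v i θ))) ⟨C', by simpa using hev⟩
  exact ⟨C, fun i => hC ⟨i, rfl⟩⟩
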